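/- arXiv:1104.0568 — 6 statements merged into one kernel-verified Lean document; each statement's English description precedes it below -/
import Mathlib

section
/- Let n ≥ 1, let 𝒯 = (T_1,...,T_n) be any tree sequence of order n and let k = (k_1,...,k_n) ∈ ℤ^n. Then the signed enumeration L_n(𝒯,k) of Gelfand-Tsetlin tree sequences associated with 𝒯 and k satisfies L_n(𝒯,k) · ∏_{1 ≤ i < j ≤ n} (j − i) = ∏_{1 ≤ i < j ≤ n} (k_j − k_i + j − i). -/
/-- The simple graph underlying a directed edge labeling. -/
def treeRel {n : ℕ} (e : Fin (n - 1) → Fin n × Fin n) : SimpleGraph (Fin n) :=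
  SimpleGraph.fromRel (fun p q => ∃ j, e j = (p, q))

/-- An `n`-tree: a directed tree whose `n` vertices are identified with `1, …, n`
(here `Fin n`) and whose `n - 1` edges are identified with `1', …, (n-1)'`
(here `Fin (n-1)`); `edge j = (p, q)` means the edge `j'` is directed from `p` to `q`. -/
structure NTree (n : ℕ) where
  edge : Fin (n - 1) → Fin n × Fin n
  loopless : ∀ j, (edge j).1 ≠ (edge j).2
  edgeInj : ∀ j j' : Fin (n - 1),
    (edge j = edge j' ∨ edge j = ((edge j').2, (edge j').1)) → j = j'
  conn : (treeRel edge).Connected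

/-- The head of the edge `j'` with respect to the standard orientation away from
the root `r`: the endpoint farther from `r`. -/
noncomputable def stdHead {n : ℕ} (T : NTree n) (r : Fin n) (j : Fin (n - 1)) : Fin n :=
  if (treeRel T.edge).dist r (T.edge j).1 < (treeRel T.edge).dist r (T.edge j).2
    then (T.edge j).2 else (T.edge j).1

/-- The permutation `π` of the vertices: first the root, then the standard heads of the
edges `1', 2', …, (n-1)'` in this order. -/
noncomputable def permFun {n : ℕ} (T : NTree n) (r : Fin n) : Fin n → Fin n :=
  fun m => if h : m.1 = 0 then r else stdHead T r ⟨m.1 - 1, by have := m.isLt; omega⟩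

/-- The sign of an `n`-tree with respect to a root `r`:
`(-1) ^ (number of reversed edges) * sgn π`. -/
noncomputable def treeSignAt {n : ℕ} (T : NTree n) (r : Fin n) : ℤ :=
  (-1) ^ (Finset.univ.filter
      (fun j : Fin (n - 1) => stdHead T r j ≠ (T.edge j).2)).card *
    (if h : Function.Bijective (permFun T r) then
      ((Equiv.Perm.sign (Equiv.ofBijective (permFun T r) h) : ℤˣ) : ℤ) else 1)

/-- The sign of an `n`-tree (independent of the root; we use the vertex `1`). -/
noncomputable def treeSign {n : ℕ} (T : NTree n) : ℤ :=
  if h : 0 < n then treeSignAt T ⟨0, h⟩ else 1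

/-- `l` is admissible for `(T, k)`: for each edge `j' = (p, q)`,
if `k p + p < k q + q` then `k p + p ≤ l j + j < k q + q`, and otherwise
`k q + q ≤ l j + j < k p + p` (all indices are 1-based in the paper, so a vertex
`p : Fin n` carries the label `k p + (p + 1)` and an edge `j : Fin (n-1)` the label
`l j + (j + 1)`). -/
def Admissible {n : ℕ} (T : NTree n) (k : Fin n → ℤ) (l : Fin (n - 1) → ℤ) : Prop :=
  ∀ j : Fin (n - 1),
    if k (T.edge j).1 + ((T.edge j).1.1 : ℤ) + 1 < k (T.edge j).2 + ((T.edge j).2.1 : ℤ) + 1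
    then k (T.edge j).1 + ((T.edge j).1.1 : ℤ) + 1 ≤ l j + (j.1 : ℤ) + 1 ∧
         l j + (j.1 : ℤ) + 1 < k (T.edge j).2 + ((T.edge j).2.1 : ℤ) + 1
    else k (T.edge j).2 + ((T.edge j).2.1 : ℤ) + 1 ≤ l j + (j.1 : ℤ) + 1 ∧
         l j + (j.1 : ℤ) + 1 < k (T.edge j).1 + ((T.edge j).1.1 : ℤ) + 1

/-- The number of inversions of the pair `(T, k)`: edges `j' = (p, q)` with
`¬ (k p + p < k q + q)`. -/
def invCount {n : ℕ} (T : NTree n) (k : Fin n → ℤ) : ℕ :=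
  (Finset.univ.filter (fun j : Fin (n - 1) =>
    ¬ (k (T.edge j).1 + ((T.edge j).1.1 : ℤ) + 1 <
        k (T.edge j).2 + ((T.edge j).2.1 : ℤ) + 1))).card

/-- A tree sequence of order `n`: `T_1, …, T_n` where `T_i` is an `i`-tree. -/
def TreeSeq (n : ℕ) := ∀ i : Fin n, NTree (i.1 + 1)

/-- A Gelfand-Tsetlin tree sequence associated with `𝒯` and `k`: a sequence of
labelings `L i : Fin (i+1) → ℤ` with top labeling `k` and such that each `L (i-1)`
is admissible for `(T_{i+1}, L i)`. -/
def IsGTTreeSeq {n : ℕ} (𝒯 : TreeSeq n) (k : Fin n → ℤ)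
    (L : ∀ i : Fin n, Fin (i.1 + 1) → ℤ) : Prop :=
  (∀ i : Fin n, i.1 + 1 = n → ∀ j : Fin (i.1 + 1),
      L i j = k ⟨j.1, by have := j.isLt; omega⟩) ∧
  ∀ i : Fin n, ∀ hi : 0 < i.1,
    Admissible (𝒯 i) (L i)
      (fun j => L ⟨i.1 - 1, by have := i.isLt; omega⟩
        ⟨j.1, by have := j.isLt; show j.1 < i.1 - 1 + 1; omega⟩)

/-- The sign of a Gelfand-Tsetlin tree sequence:
`(-1) ^ (number of inversions) * sgn 𝒯`. -/
noncomputable def gtSign {n : ℕ} (𝒯 : TreeSeq n)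
    (L : ∀ i : Fin n, Fin (i.1 + 1) → ℤ) : ℤ :=
  (-1) ^ (∑ i : Fin n, invCount (𝒯 i) (L i)) * ∏ i : Fin n, treeSign (𝒯 i)

/-- `L_n(𝒯, k)`: the signed enumeration of all Gelfand-Tsetlin tree sequences
associated with `𝒯` and `k`. -/
noncomputable def Lsum {n : ℕ} (𝒯 : TreeSeq n) (k : Fin n → ℤ) : ℤ :=
  ∑ᶠ L ∈ {L : ∀ i : Fin n, Fin (i.1 + 1) → ℤ | IsGTTreeSeq 𝒯 k L}, gtSign 𝒯 L


/-- Every non-root vertex is the strict head of some edge. -/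
lemma gt_exists_edge {n : ℕ} (T : NTree n) (r v : Fin n) (hv : v ≠ r) :
    ∃ j, stdHead T r j = v ∧
      (treeRel T.edge).dist r (T.edge j).1 ≠ (treeRel T.edge).dist r (T.edge j).2 := by
  obtain ⟨w, hw⟩ := T.conn.exists_walk_length_eq_dist v r
  cases w with
  | nil => exact absurd rfl hv
  | @cons _ u _ h w' =>
    have h1 : (treeRel T.edge).dist u r ≤ w'.length := SimpleGraph.dist_le w'
    have h2 : (treeRel T.edge).dist r u < (treeRel T.edge).dist r v := by
      rw [SimpleGraph.dist_comm, SimpleGraph.dist_comm (u := r), ← hw]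
      simp only [SimpleGraph.Walk.length_cons]; omega
    have h' : v ≠ u ∧ ((∃ j, T.edge j = (v, u)) ∨ ∃ j, T.edge j = (u, v)) := by
      simpa [treeRel, SimpleGraph.fromRel_adj] using h
    rcases h'.2 with ⟨j, hj⟩ | ⟨j, hj⟩
    · refine ⟨j, ?_, ?_⟩
      · simp [stdHead, hj, h2.le]
      · simp [hj, h2.ne']
    · refine ⟨j, ?_, ?_⟩
      · simp [stdHead, hj, h2]
      · simp [hj, h2.ne]

lemma gt_permFun_succ {n : ℕ} (T : NTree (n + 1)) (r : Fin (n + 1)) (j : Fin n) :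
    permFun T r j.succ = stdHead T r j := by
  simp [permFun]

lemma gt_permFun_zero {n : ℕ} (T : NTree (n + 1)) (r : Fin (n + 1)) :
    permFun T r 0 = r := by
  simp [permFun]

lemma gt_permFun_bij {n : ℕ} (T : NTree (n + 1)) (r : Fin (n + 1)) :
    Function.Bijective (permFun T r) := by
  apply Function.Surjective.bijective_of_finite
  intro v
  by_cases hv : v = r
  · exact ⟨0, by rw [gt_permFun_zero, hv]⟩
  · obtain ⟨j, hj, -⟩ := gt_exists_edge T r v hv
    exact ⟨Fin.succ (n := n) j, by rw [gt_permFun_succ, hj]⟩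

lemma gt_dist_ne {n : ℕ} (T : NTree (n + 1)) (r : Fin (n + 1)) (j : Fin n) :
    (treeRel T.edge).dist r (T.edge j).1 ≠ (treeRel T.edge).dist r (T.edge j).2 := by
  have hinj := (gt_permFun_bij T r).1
  have hne : stdHead T r j ≠ r := by
    intro h
    rw [← gt_permFun_succ] at h
    have := hinj (h.trans (gt_permFun_zero T r).symm)
    exact Fin.succ_ne_zero _ this
  obtain ⟨j', hj', hd⟩ := gt_exists_edge T r _ hne
  have : Fin.succ (n := n) j' = j.succ := hinj (by rw [gt_permFun_succ, gt_permFun_succ, hj'])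
  rw [← Fin.succ_inj.1 this]
  exact hd

/-- The incidence matrix of a tree, extended by the indicator row of the root. -/
def gtInc {n : ℕ} (T : NTree (n + 1)) : Matrix (Fin (n + 1)) (Fin (n + 1)) ℤ :=
  Matrix.of (Fin.cons (Pi.single 0 1)
    (fun j : Fin n => Pi.single (T.edge j).2 1 - Pi.single (T.edge j).1 1))

open Classical in
lemma gt_treeSign_mul_det {n : ℕ} (T : NTree (n + 1)) : treeSign T * (gtInc T).det = 1 := by
  have hbij := gt_permFun_bij T 0
  set σ : Equiv.Perm (Fin (n + 1)) := Equiv.ofBijective _ hbij with hσ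
  let s : Fin (n + 1) → ℤ := Fin.cons 1
    (fun j : Fin n => if stdHead T 0 j ≠ (T.edge j).2 then -1 else 1)
  have hs : ∏ m, s m = (-1) ^ (Finset.univ.filter
      (fun j : Fin (n + 1 - 1) => stdHead T 0 j ≠ (T.edge j).2)).card := by
    rw [Fin.prod_univ_succ]
    simp only [s, Fin.cons_zero, Fin.cons_succ, one_mul]
    rw [Finset.prod_ite]
    simp
  have h1 : ∀ m, s m * gtInc T m (permFun T 0 m) = 1 := by
    intro m
    refine Fin.cases ?_ (fun j => ?_) m
    · simp [s, gtInc, gt_permFun_zero]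
    · have hl := T.loopless j
      rw [gt_permFun_succ]
      simp only [s, gtInc, Fin.cons_succ, Matrix.of_apply, Pi.sub_apply]
      unfold stdHead
      split_ifs <;> simp_all
  have h2 : ∀ m v, v ≠ permFun T 0 m → (treeRel T.edge).dist 0 (permFun T 0 m) ≤
      (treeRel T.edge).dist 0 v → gtInc T m v = 0 := by
    intro m v
    refine Fin.cases ?_ (fun j => ?_) m
    · intro hv _
      rw [gt_permFun_zero] at hv
      simp [gtInc, hv]
    · have hd := gt_dist_ne T 0 j
      rw [gt_permFun_succ]
      simp only [gtInc, Fin.cons_succ, Matrix.of_apply, Pi.sub_apply]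
      unfold stdHead
      split_ifs with h
      · intro hv hle
        have : v ≠ (T.edge j).1 := by rintro rfl; omega
        simp [hv, this]
      · intro hv hle
        have : v ≠ (T.edge j).2 := by rintro rfl; omega
        simp [hv, this]
  let N : Matrix (Fin (n + 1)) (Fin (n + 1)) ℤ :=
    (Matrix.diagonal s * gtInc T).submatrix σ.symm id
  have hNapp : ∀ u v, N u v = s (σ.symm u) * gtInc T (σ.symm u) v := by
    intro u v; simp [N, Matrix.diagonal_mul]
  have hperm : ∀ u, permFun T 0 (σ.symm u) = u := fun u => σ.apply_symm_apply u
  have hN : N.det = 1 := by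
    have hbt : N.BlockTriangular (fun v => OrderDual.toDual ((treeRel T.edge).dist 0 v)) := by
      intro u v huv
      have huv' : (treeRel T.edge).dist 0 u < (treeRel T.edge).dist 0 v := huv
      rw [hNapp, h2 _ _ _ _, mul_zero]
      · rw [hperm]; rintro rfl; exact lt_irrefl _ huv'
      · rw [hperm]; exact huv'.le
    rw [hbt.det]
    apply Finset.prod_eq_one
    intro a _
    have : N.toSquareBlock (fun v => OrderDual.toDual ((treeRel T.edge).dist 0 v)) a = 1 := by
      ext ⟨u, hu⟩ ⟨v, hv⟩
      rw [Matrix.toSquareBlock_def, Matrix.of_apply]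
      simp only
      rw [hNapp]
      by_cases huv : u = v
      · subst huv
        have := h1 (σ.symm u)
        rw [hperm] at this
        simp [this]
      · rw [h2, mul_zero, Matrix.one_apply_ne]
        · simpa using huv
        · rw [hperm]; exact Ne.symm huv
        · rw [hperm]
          have := hu.trans hv.symm
          exact (OrderDual.toDual_inj.1 this).le
    rw [this, Matrix.det_one]
  rw [Matrix.det_permute, Matrix.det_mul, Matrix.det_diagonal, hs, Equiv.Perm.sign_symm] at hN
  have : treeSign T = (-1) ^ (Finset.univ.filter
      (fun j : Fin (n + 1 - 1) => stdHead T 0 j ≠ (T.edge j).2)).card *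
      ((Equiv.Perm.sign σ : ℤˣ) : ℤ) := by
    unfold treeSign treeSignAt
    rw [dif_pos (Nat.succ_pos n)]
    change _ * (if h : Function.Bijective (permFun T 0) then _ else _) = _
    rw [dif_pos hbij]
    congr!
  rw [this]
  refine Eq.trans ?_ hN
  push_cast
  ring

lemma gt_det_inc_mul {n : ℕ} (T : NTree (n + 1)) (X : Fin (n + 1) → ℤ) :
    (gtInc T).det * (Matrix.of fun (v i : Fin (n + 1)) => Ring.choose (X v) i.1).det =
    (Matrix.of fun (j i : Fin n) => Ring.choose (X (T.edge j).2) (i.1 + 1) -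
      Ring.choose (X (T.edge j).1) (i.1 + 1)).det := by
  rw [← Matrix.det_mul]
  set V : Matrix (Fin (n + 1)) (Fin (n + 1)) ℤ :=
    Matrix.of fun (v i : Fin (n + 1)) => Ring.choose (X v) i.1 with hV
  have h0 : ∀ i, (gtInc T * V) 0 i = V 0 i := by
    intro i; simp [Matrix.mul_apply, gtInc, Pi.single_apply]
  have hsucc : ∀ (j : Fin n) i, (gtInc T * V) j.succ i = V (T.edge j).2 i - V (T.edge j).1 i := by
    intro j i
    simp [Matrix.mul_apply, gtInc, Pi.single_apply, sub_mul, Finset.sum_sub_distrib]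
  rw [Matrix.det_succ_column_zero, Fin.sum_univ_succ]
  rw [Finset.sum_eq_zero]
  · rw [h0]
    simp only [hV, Matrix.of_apply, Fin.val_zero, Ring.choose_zero_right, pow_zero, one_mul,
      add_zero]
    congr 1
    ext j i
    simp only [Matrix.submatrix_apply, Fin.succAbove_zero, Matrix.of_apply]
    rw [hsucc]
    simp [hV]
  · intro j _
    rw [hsucc]
    simp [hV]

lemma gt_sum_choose (a : ℤ) (m i : ℕ) :
    ∑ y ∈ Finset.Ico a (a + m), Ring.choose y i =
      Ring.choose (a + m) (i + 1) - Ring.choose a (i + 1) := by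
  induction m with
  | zero => simp
  | succ m ih =>
    have h : Finset.Ico a (a + (m + 1 : ℕ)) = insert (a + m) (Finset.Ico a (a + m)) := by
      ext y; simp only [Finset.mem_insert, Finset.mem_Ico]; push_cast; omega
    rw [h, Finset.sum_insert (by simp), ih]
    push_cast
    rw [← add_assoc, Ring.choose_succ_succ]
    ring

lemma gt_sum_choose' {a b : ℤ} (hab : a ≤ b) (c : ℤ) (i : ℕ) :
    ∑ y ∈ Finset.Ico (a - c) (b - c), Ring.choose (y + c) i =
      Ring.choose b (i + 1) - Ring.choose a (i + 1) := by
  obtain ⟨m, rfl⟩ : ∃ m : ℕ, b = a + m := ⟨(b - a).toNat, by omega⟩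
  rw [← gt_sum_choose]
  refine Finset.sum_bij (fun y _ => y + c) ?_ ?_ ?_ ?_
  · intro y; simp only [Finset.mem_Ico]; omega
  · intro y _ z _ h; simpa using h
  · intro y hy
    refine ⟨y - c, ?_, by ring⟩
    simp only [Finset.mem_Ico] at hy ⊢; omega
  · intros; rfl

/-- Shifted labels. -/
def gtX {n : ℕ} (k : Fin n → ℤ) (v : Fin n) : ℤ := k v + (v.1 : ℤ) + 1

/-- The finset of admissible labelings. -/
noncomputable def gtAdm {n : ℕ} (T : NTree (n + 1)) (k : Fin (n + 1) → ℤ) : Finset (Fin n → ℤ) :=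
  Fintype.piFinset fun j : Fin n =>
    Finset.Ico (min (gtX k (T.edge j).1) (gtX k (T.edge j).2) - ((j.1 : ℤ) + 1))
      (max (gtX k (T.edge j).1) (gtX k (T.edge j).2) - ((j.1 : ℤ) + 1))

lemma gt_mem_adm {n : ℕ} (T : NTree (n + 1)) (k : Fin (n + 1) → ℤ) (l : Fin n → ℤ) :
    l ∈ gtAdm T k ↔ Admissible T k l := by
  unfold gtAdm Admissible
  rw [Fintype.mem_piFinset]
  refine forall_congr' fun j => ?_
  simp only [Finset.mem_Ico, gtX]
  split_ifs with h
  · rw [min_eq_left h.le, max_eq_right h.le]; constructor <;> intro h <;> constructor <;> linarith [h.1, h.2]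
  · rw [not_lt] at h
    rw [min_eq_right h, max_eq_left h]; constructor <;> intro h <;> constructor <;> linarith [h.1, h.2]

lemma gt_signed_sum {n : ℕ} (T : NTree (n + 1)) (k : Fin (n + 1) → ℤ) :
    (-1) ^ invCount T k * ∑ l ∈ gtAdm T k,
      (Matrix.of fun (j i : Fin n) => Ring.choose (gtX l j) i.1).det =
    (Matrix.of fun (j i : Fin n) => Ring.choose (gtX k (T.edge j).2) (i.1 + 1) -
      Ring.choose (gtX k (T.edge j).1) (i.1 + 1)).det := by
  let s : Fin n → ℤ := fun j =>
    if ¬ (gtX k (T.edge j).1 < gtX k (T.edge j).2) then -1 else 1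
  have hs : (-1) ^ invCount T k = ∏ j, s j := by
    simp only [s]
    rw [Finset.prod_ite]
    rw [Finset.prod_const, Finset.prod_const_one, mul_one]
    rfl
  have hml := (Matrix.detRowAlternating (R := ℤ) (n := Fin n)).toMultilinearMap.map_sum_finset
    (fun (j : Fin n) (y : ℤ) (i : Fin n) => Ring.choose (y + ((j.1 : ℤ) + 1)) i.1)
    (fun j : Fin n =>
    Finset.Ico (min (gtX k (T.edge j).1) (gtX k (T.edge j).2) - ((j.1 : ℤ) + 1))
      (max (gtX k (T.edge j).1) (gtX k (T.edge j).2) - ((j.1 : ℤ) + 1)))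
  have hsum : ∑ l ∈ gtAdm T k,
      (Matrix.of fun (j i : Fin n) => Ring.choose (gtX l j) i.1).det =
      (Matrix.of fun (j i : Fin n) => ∑ y ∈ Finset.Ico
        (min (gtX k (T.edge j).1) (gtX k (T.edge j).2) - ((j.1 : ℤ) + 1))
        (max (gtX k (T.edge j).1) (gtX k (T.edge j).2) - ((j.1 : ℤ) + 1)),
        Ring.choose (y + ((j.1 : ℤ) + 1)) i.1).det := by
    have e : (Matrix.of fun (j i : Fin n) => ∑ y ∈ Finset.Ico
        (min (gtX k (T.edge j).1) (gtX k (T.edge j).2) - ((j.1 : ℤ) + 1))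
        (max (gtX k (T.edge j).1) (gtX k (T.edge j).2) - ((j.1 : ℤ) + 1)),
        Ring.choose (y + ((j.1 : ℤ) + 1)) i.1) = (fun j => ∑ y ∈ Finset.Ico
        (min (gtX k (T.edge j).1) (gtX k (T.edge j).2) - ((j.1 : ℤ) + 1))
        (max (gtX k (T.edge j).1) (gtX k (T.edge j).2) - ((j.1 : ℤ) + 1)),
        fun i : Fin n => Ring.choose (y + ((j.1 : ℤ) + 1)) i.1) := by
      ext j i; rw [Finset.sum_apply]; rfl
    rw [e]
    refine Eq.trans ?_ hml.symm
    refine Finset.sum_congr rfl fun l _ => ?_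
    simp only [gtX, add_assoc]
    rfl
  rw [hs, hsum, ← Matrix.det_mul_column]
  congr 1
  ext j i
  simp only [Matrix.of_apply, s]
  rw [gt_sum_choose' min_le_max]
  split_ifs with h
  · rw [min_eq_left h.le, max_eq_right h.le]; ring
  · rw [not_lt] at h
    rw [min_eq_right h, max_eq_left h]; ring

lemma gt_layer {n : ℕ} (T : NTree (n + 1)) (k : Fin (n + 1) → ℤ) :
    treeSign T * ((-1) ^ invCount T k * ∑ l ∈ gtAdm T k,
      (Matrix.of fun (j i : Fin n) => Ring.choose (gtX l j) i.1).det) =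
    (Matrix.of fun (v i : Fin (n + 1)) => Ring.choose (gtX k v) i.1).det := by
  rw [gt_signed_sum, ← gt_det_inc_mul, ← mul_assoc, gt_treeSign_mul_det, one_mul]

lemma gt_vandermonde {n : ℕ} (X : Fin n → ℤ) :
    (Matrix.of fun (v i : Fin n) => Ring.choose (X v) i.1).det * ∏ i : Fin n, (i.1.factorial : ℤ)
      = (Matrix.vandermonde X).det := by
  rw [Matrix.det_eval_matrixOfPolynomials_eq_det_vandermonde X (fun i => descPochhammer ℤ i.1)
    (fun i => descPochhammer_natDegree ℤ i.1) (fun i => monic_descPochhammer ℤ i.1),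
    mul_comm, ← Matrix.det_mul_row]
  congr 1
  ext v i
  simp only [Matrix.of_apply]
  rw [← nsmul_eq_mul, ← Ring.descPochhammer_eq_factorial_smul_choose, Polynomial.eval_eq_smeval]

lemma gt_vdm_prod {n : ℕ} (X : Fin n → ℤ) :
    (Matrix.vandermonde X).det = ∏ q : Fin n, ∏ p ∈ Finset.Iio q, (X q - X p) := by
  rw [Matrix.det_vandermonde]
  refine Finset.prod_comm' ?_
  simp

lemma gt_final {n : ℕ} (hn : 1 ≤ n) (k : Fin n → ℤ) :
    (Matrix.of fun (v i : Fin n) => Ring.choose (gtX k v) i.1).det *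
      ∏ q : Fin n, ∏ p ∈ Finset.Iio q, ((q.1 : ℤ) - (p.1 : ℤ)) =
      ∏ q : Fin n, ∏ p ∈ Finset.Iio q, (k q - k p + ((q.1 : ℤ) - (p.1 : ℤ))) := by
  have h1 : ∏ q : Fin n, ∏ p ∈ Finset.Iio q, ((q.1 : ℤ) - (p.1 : ℤ)) =
      ∏ i : Fin n, (i.1.factorial : ℤ) := by
    obtain ⟨m, rfl⟩ : ∃ m, n = m + 1 := ⟨n - 1, by omega⟩
    rw [← gt_vdm_prod (fun q : Fin (m + 1) => (q.1 : ℤ)),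
      Matrix.det_vandermonde_id_eq_superFactorial, ← Nat.prod_range_succ_factorial,
      Finset.prod_range]
    push_cast
    rfl
  rw [h1, gt_vandermonde, gt_vdm_prod]
  refine Finset.prod_congr rfl fun q _ => Finset.prod_congr rfl fun p _ => ?_
  unfold gtX; ring

/-- Forget the last tree. -/
def gtInit {n : ℕ} (𝒯 : TreeSeq (n + 1)) : TreeSeq n := fun i => 𝒯 i.castSucc

/-- Append a top row. -/
def gtSnoc {n : ℕ} (k : Fin (n + 1) → ℤ) (L : ∀ i : Fin n, Fin (i.1 + 1) → ℤ) :
    ∀ i : Fin (n + 1), Fin (i.1 + 1) → ℤ :=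
  Fin.snoc (α := fun i : Fin (n + 1) => Fin (i.1 + 1) → ℤ) L k

lemma gtSnoc_last {n : ℕ} (k : Fin (n + 1) → ℤ) (L : ∀ i : Fin n, Fin (i.1 + 1) → ℤ) :
    gtSnoc k L (Fin.last n) = k := by
  unfold gtSnoc; exact Fin.snoc_last _ _

lemma gtSnoc_castSucc {n : ℕ} (k : Fin (n + 1) → ℤ) (L : ∀ i : Fin n, Fin (i.1 + 1) → ℤ)
    (i : Fin n) : gtSnoc k L i.castSucc = L i := by
  unfold gtSnoc; exact Fin.snoc_castSucc _ _ _

lemma gtSnoc_inj {n : ℕ} (k : Fin (n + 1) → ℤ) : Function.Injective (gtSnoc k) := by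
  intro L L' h
  funext i
  rw [← gtSnoc_castSucc k L, ← gtSnoc_castSucc k L', h]

lemma gtSnoc_lt {n : ℕ} (k : Fin (n + 1) → ℤ) (L : ∀ i : Fin n, Fin (i.1 + 1) → ℤ)
    (m : ℕ) (hm : m < n) (hm' : m < n + 1) : gtSnoc k L ⟨m, hm'⟩ = L ⟨m, hm⟩ :=
  gtSnoc_castSucc k L ⟨m, hm⟩

lemma gtSign_snoc {n : ℕ} (𝒯 : TreeSeq (n + 1)) (k : Fin (n + 1) → ℤ)
    (L : ∀ i : Fin n, Fin (i.1 + 1) → ℤ) :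
    gtSign 𝒯 (gtSnoc k L) = treeSign (𝒯 (Fin.last n)) *
      ((-1) ^ invCount (𝒯 (Fin.last n)) k) * gtSign (gtInit 𝒯) L := by
  unfold gtSign
  rw [Fin.sum_univ_castSucc, Fin.prod_univ_castSucc, gtSnoc_last, pow_add]
  simp only [gtSnoc_castSucc]
  change _ = _ * ((-1) ^ (∑ i : Fin n, invCount (𝒯 i.castSucc) (L i)) *
    ∏ i : Fin n, treeSign (𝒯 i.castSucc))
  ring

lemma gt_isGT_top {n : ℕ} {𝒯 : TreeSeq n} {l l' : Fin n → ℤ}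
    {L : ∀ i : Fin n, Fin (i.1 + 1) → ℤ} (h : IsGTTreeSeq 𝒯 l L) (h' : IsGTTreeSeq 𝒯 l' L) :
    l = l' := by
  funext j
  have hj := j.isLt
  have e := h.1 ⟨n - 1, by omega⟩ (by simp only; omega) ⟨j.1, by simp only; omega⟩
  have e' := h'.1 ⟨n - 1, by omega⟩ (by simp only; omega) ⟨j.1, by simp only; omega⟩
  exact e.symm.trans e'

lemma gt_isGT_iff {n : ℕ} (𝒯 : TreeSeq (n + 1)) (k : Fin (n + 1) → ℤ)
    (L : ∀ i : Fin (n + 1), Fin (i.1 + 1) → ℤ) :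
    IsGTTreeSeq 𝒯 k L ↔ ∃ l ∈ gtAdm (𝒯 (Fin.last n)) k,
      ∃ L', IsGTTreeSeq (gtInit 𝒯) l L' ∧ gtSnoc k L' = L := by
  constructor
  · intro h
    have htop : L (Fin.last n) = k := by
      funext j
      exact h.1 (Fin.last n) rfl j
    refine ⟨fun j => L ⟨n - 1, by omega⟩ ⟨j.1, by have := j.isLt; simp only; omega⟩, ?_,
      fun i => L i.castSucc, ⟨?_, ?_⟩, ?_⟩
    · rw [gt_mem_adm]
      rcases Nat.eq_zero_or_pos n with rfl | hn
      · intro j; exact j.elim0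
      · have := h.2 (Fin.last n) hn
        rw [htop] at this
        exact this
    · intro i hi j
      obtain ⟨i, hlt⟩ := i
      have : i = n - 1 := by simp only at hi; omega
      subst this
      rfl
    · intro i hi
      exact h.2 i.castSucc hi
    · funext i
      refine Fin.lastCases ?_ (fun i => ?_) i
      · rw [gtSnoc_last, htop]
      · rw [gtSnoc_castSucc]
  · rintro ⟨l, hl, L', hL', rfl⟩
    rw [gt_mem_adm] at hl
    refine ⟨?_, ?_⟩
    · intro i hi j
      have : i = Fin.last n := Fin.ext (by simp only [Fin.val_last]; omega)
      subst this
      rw [gtSnoc_last]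
      rfl
    · intro i
      refine Fin.lastCases ?_ (fun i => ?_) i
      · intro hn
        have hn' : 0 < n := hn
        rw [gtSnoc_last]
        convert hl using 1
        funext j
        have hj : j.1 < n := j.isLt
        change gtSnoc k L' ⟨n - 1, _⟩ _ = _
        have := hL'.1 ⟨n - 1, by omega⟩ (by simp only; omega) ⟨j.1, by simp only; omega⟩
        refine Eq.trans ?_ this
        exact congrFun (gtSnoc_lt k L' (n - 1) (by omega) (by omega)) _
      · intro hi
        have := hL'.2 i hi
        have hlt := i.isLt
        rw [gtSnoc_castSucc]
        exact (congrArg (Admissible (gtInit 𝒯 i) (L' i)) (funext fun j =>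
          congrFun (gtSnoc_lt k L' (i.1 - 1) (by omega) (by omega)) _)).mpr this

lemma gt_main {n : ℕ} (𝒯 : TreeSeq n) (k : Fin n → ℤ) :
    {L | IsGTTreeSeq 𝒯 k L}.Finite ∧
    Lsum 𝒯 k = (Matrix.of fun (v i : Fin n) => Ring.choose (gtX k v) i.1).det := by
  induction n with
  | zero =>
    have : {L | IsGTTreeSeq 𝒯 k L} = {fun i => i.elim0} := by
      ext L
      simp only [Set.mem_ofPred_eq, Set.mem_singleton_iff]
      refine ⟨fun _ => funext fun i => i.elim0, fun _ => ⟨fun i => i.elim0, fun i => i.elim0⟩⟩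
    refine ⟨this ▸ Set.finite_singleton _, ?_⟩
    unfold Lsum
    rw [this, finsum_mem_singleton]
    simp [gtSign]
  | succ n ih =>
    have hset : {L | IsGTTreeSeq 𝒯 k L} = ⋃ l ∈ ((gtAdm (n := n) (𝒯 (Fin.last n)) k : Finset (Fin n → ℤ)) : Set (Fin n → ℤ)),
        Set.image (gtSnoc k) {L' | IsGTTreeSeq (gtInit 𝒯) l L'} := by
      ext L
      simp only [Set.mem_ofPred_eq, Set.mem_iUnion, Set.mem_image, Finset.mem_coe, exists_prop]
      exact gt_isGT_iff 𝒯 k L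
    have hfin : ∀ l ∈ ((gtAdm (n := n) (𝒯 (Fin.last n)) k : Finset (Fin n → ℤ)) : Set (Fin n → ℤ)),
        (Set.image (gtSnoc k) {L' | IsGTTreeSeq (gtInit 𝒯) l L'}).Finite :=
      fun l _ => (ih (gtInit 𝒯) l).1.image _
    refine ⟨?_, ?_⟩
    · rw [hset]
      exact (Finset.finite_toSet _).biUnion hfin
    · refine Eq.trans ?_ (gt_layer (n := n) (𝒯 (Fin.last n)) k)
      unfold Lsum
      rw [hset, finsum_mem_biUnion ?_ (Finset.finite_toSet _) hfin, finsum_mem_coe_finset,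
        ← mul_assoc, Finset.mul_sum]
      · refine Finset.sum_congr rfl fun l _ => ?_
        rw [finsum_mem_image (gtSnoc_inj k).injOn, ← (ih (gtInit 𝒯) l).2]
        simp only [gtSign_snoc]
        unfold Lsum
        exact (mul_finsum_mem' _ _ (ih (gtInit 𝒯) l).1).symm
      · intro l _ l' _ hne
        refine Set.disjoint_left.2 ?_
        rintro _ ⟨L, hL, rfl⟩ ⟨L', hL', he⟩
        rw [gtSnoc_inj k he] at hL'
        exact hne (gt_isGT_top hL hL')

theorem gt_tree_sequence_signed_enumeration (n : ℕ) (hn : 1 ≤ n)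
    (𝒯 : TreeSeq n) (k : Fin n → ℤ) :
    Lsum 𝒯 k * ∏ q : Fin n, ∏ p ∈ Finset.Iio q, ((q.1 : ℤ) - (p.1 : ℤ)) =
      ∏ q : Fin n, ∏ p ∈ Finset.Iio q, (k q - k p + ((q.1 : ℤ) - (p.1 : ℤ))) := by
  rw [(gt_main 𝒯 k).2]
  exact gt_final hn k
end

section
/- Let n ≥ 1 and let k = (k_1,...,k_n) ∈ ℤ^n be weakly increasing (k_1 ≤ k_2 ≤ ... ≤ k_n). Then the number of Gelfand-Tsetlin patterns with n rows and bottom row a_{n,j} = k_j (j = 1,...,n), multiplied by ∏_{1 ≤ i < j ≤ n} (j − i), equals ∏_{1 ≤ i < j ≤ n} (k_j − k_i + j − i). -/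
/-- A Gelfand-Tsetlin pattern with `n` rows: a triangular array
`(a_{i,j})_{1 ≤ j ≤ i ≤ n}` of integers with `a_{i+1,j} ≤ a_{i,j} ≤ a_{i+1,j+1}`. -/
def IsGT {n : ℕ} (a : ∀ i : Fin n, Fin (i.1 + 1) → ℤ) : Prop :=
  ∀ i : Fin n, ∀ hi : i.1 + 1 < n, ∀ j : Fin (i.1 + 1),
    a ⟨i.1 + 1, hi⟩ ⟨j.1, by have := j.isLt; show j.1 < i.1 + 1 + 1; omega⟩ ≤ a i j ∧
      a i j ≤ a ⟨i.1 + 1, hi⟩ ⟨j.1 + 1, by have := j.isLt; show j.1 + 1 < i.1 + 1 + 1; omega⟩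

/-- The bottom row (row `n`) of a triangular array equals `k`. -/
def BottomRow {n : ℕ} (a : ∀ i : Fin n, Fin (i.1 + 1) → ℤ) (k : Fin n → ℤ) : Prop :=
  ∀ i : Fin n, i.1 + 1 = n → ∀ j : Fin (i.1 + 1),
    a i j = k ⟨j.1, by have := j.isLt; omega⟩

def vdm {n : ℕ} (x : Fin n → ℤ) : ℤ := ∏ q : Fin n, ∏ p ∈ Finset.Iio q, (x q - x p)

lemma vdm_eq_det {n : ℕ} (x : Fin n → ℤ) :
    vdm x = (Matrix.of fun i j : Fin n => (descPochhammer ℤ j.1).eval (x i)).det := by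
  have h := Matrix.det_eval_matrixOfPolynomials_eq_det_vandermonde x
    (fun j : Fin n => descPochhammer ℤ j.1) (fun i => descPochhammer_natDegree ℤ i.1)
    (fun i => monic_descPochhammer ℤ i.1)
  rw [← h, Matrix.det_vandermonde, vdm]
  apply Finset.prod_comm'
  simp

lemma desc_step (j : ℕ) (a : ℤ) :
    (descPochhammer ℤ (j+1)).eval (a + 1) - (descPochhammer ℤ (j+1)).eval a
      = (j+1) * (descPochhammer ℤ j).eval a := by
  rw [descPochhammer_succ_eval j a, descPochhammer_succ_left]
  simp
  ring

lemma desc_sum (j : ℕ) (a b : ℤ) (h : a ≤ b) :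
    (descPochhammer ℤ (j+1)).eval b - (descPochhammer ℤ (j+1)).eval a
      = (j+1) * ∑ y ∈ Finset.Ico a b, (descPochhammer ℤ j).eval y := by
  induction b, h using Int.le_induction with
  | base => simp
  | succ b hb ih =>
    have : Finset.Ico a (b+1) = insert b (Finset.Ico a b) := by
      ext z; simp; omega
    rw [this, Finset.sum_insert (by simp), mul_add, ← ih, ← desc_step]
    ring

lemma key {n : ℕ} (x : Fin (n+1) → ℤ) (hx : ∀ i : Fin n, x i.castSucc ≤ x i.succ) :
    (∏ j : Fin n, ((j.1 : ℤ) + 1)) *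
      ∑ y ∈ Fintype.piFinset (fun i : Fin n => Finset.Ico (x i.castSucc) (x i.succ)), vdm y
      = vdm x := by
  have h1 : ∑ y ∈ Fintype.piFinset (fun i : Fin n => Finset.Ico (x i.castSucc) (x i.succ)), vdm y
      = (Matrix.of fun i j : Fin n => ∑ y ∈ Finset.Ico (x i.castSucc) (x i.succ),
          (descPochhammer ℤ j.1).eval y).det := by
    have := (Matrix.detRowAlternating (R := ℤ) (n := Fin n)).toMultilinearMap.map_sum_finset
      (fun (i : Fin n) (y : ℤ) (j : Fin n) => (descPochhammer ℤ j.1).eval y)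
      (fun i : Fin n => Finset.Ico (x i.castSucc) (x i.succ))
    simp only [vdm_eq_det]
    refine Eq.trans this.symm ?_
    change Matrix.det _ = Matrix.det _
    congr 1
    ext i j
    simp
  rw [h1, ← Matrix.det_mul_row, vdm_eq_det]
  set A : Matrix (Fin (n+1)) (Fin (n+1)) ℤ :=
    Matrix.of fun i j => (descPochhammer ℤ j.1).eval (x i) with hA
  let B : Matrix (Fin (n+1)) (Fin (n+1)) ℤ :=
    Matrix.of fun i j => Fin.cases (A 0 j) (fun i' => A i'.succ j - A i'.castSucc j) i
  have hAB : A.det = B.det := by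
    apply Matrix.det_eq_of_forall_row_eq_smul_add_pred (fun _ => 1)
    · intro j; simp [B]
    · intro i j; simp [B]
  rw [hAB, Matrix.det_succ_column_zero, Fin.sum_univ_succ, Finset.sum_eq_zero]
  · have : B 0 0 = 1 := by simp [B, hA]
    rw [this]
    simp only [Fin.val_zero, pow_zero, one_mul, add_zero]
    congr 1
    ext i j
    simp [B, hA, desc_sum _ _ _ (hx i)]
  · intro i _
    have : B i.succ 0 = 0 := by simp [B, hA]
    simp [this]

abbrev GTPat (n : ℕ) (k : Fin n → ℤ) : Type :=
  {a : ∀ i : Fin n, Fin (i.1 + 1) → ℤ // IsGT a ∧ BottomRow a k}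

noncomputable abbrev InterRow {n : ℕ} (k : Fin (n+1) → ℤ) : Finset (Fin n → ℤ) :=
  Fintype.piFinset (fun i : Fin n => Finset.Icc (k i.castSucc) (k i.succ))

lemma inter_mono {n : ℕ} {k : Fin (n+1) → ℤ} {l : Fin n → ℤ} (hl : l ∈ InterRow k)
    (hk : ∀ p q, p ≤ q → k p ≤ k q) : ∀ p q, p ≤ q → l p ≤ l q := by
  intro p q hpq
  rcases hpq.eq_or_lt with h | h
  · rw [h]
  have h1 := Fintype.mem_piFinset.1 hl
  have hp := (Finset.mem_Icc.1 (h1 p)).2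
  have hq := (Finset.mem_Icc.1 (h1 q)).1
  exact hp.trans ((hk _ _ (by rw [Fin.le_def, Fin.val_succ, Fin.val_castSucc]; exact h)).trans hq)

/-- Adding a bottom row to an array. -/
def extendRow {n : ℕ} (k : Fin (n+1) → ℤ) (b : ∀ i : Fin n, Fin (i.1 + 1) → ℤ) :
    ∀ i : Fin (n+1), Fin (i.1 + 1) → ℤ :=
  fun i j => if h : i.1 < n then b ⟨i.1, h⟩ j else k ⟨j.1, by omega⟩

/-- The penultimate row of an array. -/
def penult {n : ℕ} (a : ∀ i : Fin (n+1), Fin (i.1 + 1) → ℤ) : Fin n → ℤ :=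
  fun j => a ⟨n - 1, by omega⟩ ⟨j.1, by have := j.isLt; show j.1 < n - 1 + 1; omega⟩

lemma arr_congr {n : ℕ} (a : ∀ i : Fin n, Fin (i.1 + 1) → ℤ) {i i' j j' : ℕ}
    (hi : i < n) (hj : j < i + 1) (hi' : i' < n) (hj' : j' < i' + 1) (h : i = i') (h2 : j = j') :
    a ⟨i, hi⟩ ⟨j, hj⟩ = a ⟨i', hi'⟩ ⟨j', hj'⟩ := by
  subst h; subst h2; rfl

noncomputable def gtEquiv {n : ℕ} (k : Fin (n+1) → ℤ) :
    GTPat (n+1) k ≃ Σ l : {l // l ∈ InterRow k}, GTPat n l.1 where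
  toFun a := ⟨⟨penult a.1, by
      obtain ⟨a, ha, hb⟩ := a
      rw [Fintype.mem_piFinset]
      intro j
      have hj := j.isLt
      have h := ha ⟨n-1, by omega⟩ (by simp; omega) ⟨j.1, by simp; omega⟩
      have e1 := hb ⟨n, by omega⟩ rfl ⟨j.1, by show j.1 < n + 1; omega⟩
      have e2 := hb ⟨n, by omega⟩ rfl ⟨j.1 + 1, by show j.1 + 1 < n + 1; omega⟩
      rw [Finset.mem_Icc]
      have f1 := arr_congr a (i := n - 1 + 1) (i' := n) (j := j.1) (j' := j.1)
        (by omega) (by omega) (by omega) (by omega) (by omega) rfl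
      have f2 := arr_congr a (i := n - 1 + 1) (i' := n) (j := j.1 + 1) (j' := j.1 + 1)
        (by omega) (by omega) (by omega) (by omega) (by omega) rfl
      constructor
      · exact (e1.symm.trans f1.symm).le.trans h.1
      · exact h.2.trans (f2.trans e2).le⟩,
    ⟨fun i j => a.1 i.castSucc j, by
      obtain ⟨a, ha, hb⟩ := a
      refine ⟨?_, ?_⟩
      · intro i hi j
        exact ha i.castSucc (by rw [Fin.val_castSucc]; omega) j
      · intro i hi j
        exact arr_congr a (i := i.1) (i' := n - 1) (j := j.1) (j' := j.1)
          (by omega) (by omega) (by omega) (by omega) (by omega) rfl⟩⟩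
  invFun s := ⟨extendRow k s.2.1, by
    obtain ⟨⟨l, hl⟩, ⟨b, hb, hc⟩⟩ := s
    refine ⟨?_, ?_⟩
    · intro i hi j
      by_cases h : i.1 + 1 < n
      · have h' : i.1 < n := by omega
        simpa only [extendRow, h, h', dif_pos] using hb ⟨i.1, h'⟩ h j
      · have h' : i.1 < n := by omega
        have := hc ⟨i.1, h'⟩ (by simp; omega) j
        have h3 := Finset.mem_Icc.1 (Fintype.mem_piFinset.1 hl ⟨j.1, by omega⟩)
        simp only [extendRow, h, h', dif_pos]
        simp only [dif_neg, not_false_eq_true]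
        rw [this]
        exact h3
    · intro i hi j
      have h : ¬ i.1 < n := by omega
      simp only [extendRow, h, dif_neg, not_false_eq_true]⟩
  left_inv := by
    rintro ⟨a, ha, hb⟩
    apply Subtype.ext
    funext i j
    by_cases h : i.1 < n
    · simp only [extendRow, h, dif_pos]; rfl
    · simp only [extendRow, h, dif_neg, not_false_eq_true]
      exact (hb i (by omega) j).symm
  right_inv := by
    rintro ⟨⟨l, hl⟩, ⟨b, hb, hc⟩⟩
    apply Sigma.subtype_ext
    · apply Subtype.ext
      funext j
      have hj := j.isLt
      have h : n - 1 < n := by omega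
      simp only [penult, extendRow, h, dif_pos]
      exact hc ⟨n-1, h⟩ (by simp; omega) _
    · funext i j
      have h := i.isLt
      simp only [extendRow, Fin.val_castSucc, h, dif_pos]

lemma gt_finite : ∀ (n : ℕ) (k : Fin n → ℤ), Finite (GTPat n k) := by
  intro n
  induction n with
  | zero => intro k; infer_instance
  | succ n ih => 
    intro k
    exact Finite.of_equiv _ (gtEquiv k).symm

lemma inter_sum {n : ℕ} (k : Fin (n+1) → ℤ) :
    ∑ l ∈ InterRow k, vdm (fun i => l i + (i.1 : ℤ)) =
    ∑ y ∈ Fintype.piFinset (fun i : Fin n => Finset.Ico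
      (k i.castSucc + (i.castSucc.1 : ℤ)) (k i.succ + (i.succ.1 : ℤ))), vdm y := by
  refine Finset.sum_bij' (fun l _ i => l i + (i.1 : ℤ)) (fun y _ i => y i - (i.1 : ℤ)) ?_ ?_ ?_ ?_ ?_
  · intro l hl
    rw [Fintype.mem_piFinset] at *
    intro i
    have := hl i
    simp at *
    omega
  · intro l hl
    rw [Fintype.mem_piFinset] at *
    intro i
    have := hl i
    simp at *
    omega
  · intros; simp
  · intros; simp
  · intros; rfl

lemma vdm_id (n : ℕ) : vdm (fun i : Fin (n+1) => (i.1 : ℤ)) =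
    (∏ j : Fin n, ((j.1 : ℤ) + 1)) * vdm (fun i : Fin n => (i.1 : ℤ)) := by
  have := key (fun i : Fin (n+1) => (i.1 : ℤ)) (by simp)
  rw [← this]
  congr 1
  rw [Finset.sum_eq_single (fun i : Fin n => (i.1 : ℤ))]
  · intro y hy hne
    exfalso
    apply hne
    funext i
    have := Fintype.mem_piFinset.1 hy i
    simp at this
    omega
  · intro h
    exfalso
    apply h
    simp [Fintype.mem_piFinset]

lemma gt_main_s2 (n : ℕ) : ∀ (k : Fin n → ℤ) (_ : ∀ p q : Fin n, p ≤ q → k p ≤ k q),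
    (Nat.card (GTPat n k) : ℤ) * vdm (fun i : Fin n => (i.1 : ℤ)) =
      vdm (fun i => k i + (i.1 : ℤ)) := by
  induction n with
  | zero =>
    intro k _
    have : Nat.card (GTPat 0 k) = 1 := by
      rw [Nat.card_eq_one_iff_unique]
      refine ⟨⟨fun a b => Subtype.ext (Subsingleton.elim _ _)⟩, ⟨⟨fun i => i.elim0, ?_, ?_⟩⟩⟩
      · intro i; exact i.elim0
      · intro i; exact i.elim0
    rw [this]; simp [vdm]
  | succ n ih =>
    intro k hk
    have : ∀ l : {l // l ∈ InterRow k}, Finite (GTPat n l.1) := fun l => gt_finite n l.1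
    rw [Nat.card_congr (gtEquiv k), Nat.card_sigma, vdm_id]
    rw [← key (fun i => k i + (i.1 : ℤ)), ← inter_sum, ← Finset.sum_coe_sort (InterRow k)]
    · push_cast
      rw [mul_left_comm, Finset.sum_mul]
      congr 1
      apply Finset.sum_congr rfl
      intro l _
      exact ih l.1 (inter_mono l.2 hk)
    · intro i
      have := hk i.castSucc i.succ (by simp [Fin.le_def])
      simp
      omega

/-- For a weakly increasing bottom row `k`, the number of Gelfand-Tsetlin patterns with
bottom row `k`, multiplied by `∏_{1 ≤ i < j ≤ n} (j - i)`, equals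
`∏_{1 ≤ i < j ≤ n} (k_j - k_i + j - i)`. -/
theorem gt_pattern_enumeration (n : ℕ) (hn : 1 ≤ n) (k : Fin n → ℤ)
    (hk : ∀ p q : Fin n, p ≤ q → k p ≤ k q) :
    (Nat.card {a : ∀ i : Fin n, Fin (i.1 + 1) → ℤ // IsGT a ∧ BottomRow a k} : ℤ) *
        ∏ q : Fin n, ∏ p ∈ Finset.Iio q, ((q.1 : ℤ) - (p.1 : ℤ)) =
      ∏ q : Fin n, ∏ p ∈ Finset.Iio q, (k q - k p + ((q.1 : ℤ) - (p.1 : ℤ))) := by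
  refine (gt_main_s2 n k hk).trans ?_
  unfold vdm
  refine Finset.prod_congr rfl fun q _ => Finset.prod_congr rfl fun p _ => ?_
  ring
end

section
/- Let n ≥ 1, let 𝒯 be a tree sequence of order n and let ρ ≥ 1. Then e_ρ(Δ_1,...,Δ_n) applied to the function k ↦ L_n(𝒯,k) is identically zero on ℤ^n, where Δ_i is the forward difference operator in the i-th coordinate and e_ρ is the ρ-th elementary symmetric polynomial in n variables. -/
/-- `kup k i t` shifts the `i`-th coordinate of `k` by `t`. -/
def kup {n : ℕ} (k : Fin n → ℤ) (i : Fin n) (t : ℤ) : Fin n → ℤ :=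
  fun j => if j = i then k j + t else k j

/-- The forward difference operator `Δ_i = E_i - id` on functions `ℤ^n → ℚ`. -/
def DeltaOp (n : ℕ) (i : Fin n) : ((Fin n → ℤ) → ℚ) → ((Fin n → ℤ) → ℚ) :=
  fun A k => A (kup k i 1) - A k

/-- The backward difference operator `δ_i = id - E_i⁻¹` on functions `ℤ^n → ℚ`. -/
def deltaOp (n : ℕ) (i : Fin n) : ((Fin n → ℤ) → ℚ) → ((Fin n → ℤ) → ℚ) :=
  fun A k => A k - A (kup k i (-1))

/-- The product (composition) of the commuting operators `F i`, `i ∈ S`. -/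
noncomputable def opProd (n : ℕ) (F : Fin n → ((Fin n → ℤ) → ℚ) → ((Fin n → ℤ) → ℚ))
    (S : Finset (Fin n)) : ((Fin n → ℤ) → ℚ) → ((Fin n → ℤ) → ℚ) :=
  S.toList.foldr (fun i f => F i ∘ f) id

/-- The `ρ`-th elementary symmetric polynomial `e_ρ(F 1, …, F n)` of the commuting
operators `F i`, applied to a function `ℤ^n → ℚ`. -/
noncomputable def esymmOp (n ρ : ℕ) (F : Fin n → ((Fin n → ℤ) → ℚ) → ((Fin n → ℤ) → ℚ)) :
    ((Fin n → ℤ) → ℚ) → ((Fin n → ℤ) → ℚ) :=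
  fun A k => ∑ S ∈ Finset.powersetCard ρ (Finset.univ : Finset (Fin n)), opProd n F S A k

/-- The matrix of binomial coefficients. -/
noncomputable def gtB {n : ℕ} (k : Fin n → ℤ) : Matrix (Fin n) (Fin n) ℤ :=
  Matrix.of fun v i => Ring.choose (gtX k v) i.1

/-- Finset of labels allowed on an edge. -/
noncomputable def gtIco {n : ℕ} (T : NTree (n + 1)) (k : Fin (n + 1) → ℤ) (j : Fin n) : Finset ℤ :=
  if gtX k (T.edge j).1 < gtX k (T.edge j).2 then
    Finset.Ico (gtX k (T.edge j).1 - (j.1 + 1)) (gtX k (T.edge j).2 - (j.1 + 1))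
  else Finset.Ico (gtX k (T.edge j).2 - (j.1 + 1)) (gtX k (T.edge j).1 - (j.1 + 1))

/-- Sign of an edge. -/
def gtS {n : ℕ} (T : NTree (n + 1)) (k : Fin (n + 1) → ℤ) (j : Fin n) : ℤ :=
  if gtX k (T.edge j).1 < gtX k (T.edge j).2 then 1 else -1

lemma mem_box {n : ℕ} (T : NTree (n + 1)) (k : Fin (n + 1) → ℤ) (l : Fin n → ℤ) :
    l ∈ Fintype.piFinset (gtIco T k) ↔ Admissible T k l := by
  rw [Fintype.mem_piFinset]
  unfold Admissible
  refine forall_congr' fun j => ?_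
  unfold gtIco gtX
  split_ifs
  · rw [Finset.mem_Ico]
    constructor <;> rintro ⟨h1, h2⟩ <;> constructor <;> linarith
  · rw [Finset.mem_Ico]
    constructor <;> rintro ⟨h1, h2⟩ <;> constructor <;> linarith

lemma inv_sign {n : ℕ} (T : NTree (n + 1)) (k : Fin (n + 1) → ℤ) :
    (-1 : ℤ) ^ invCount T k = ∏ j : Fin n, gtS T k j := by
  unfold invCount gtS gtX
  rw [Finset.prod_ite, Finset.prod_const_one, one_mul, Finset.prod_const]
  rfl

lemma choose_sum (a : ℤ) (m i : ℕ) (c : ℤ) :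
    ∑ y ∈ Finset.Ico (a - c) (a + m - c), Ring.choose (y + c) i
      = Ring.choose (a + m) (i + 1) - Ring.choose a (i + 1) := by
  induction m with
  | zero => simp
  | succ m ih =>
    have : Finset.Ico (a - c) (a + (m + 1 : ℕ) - c)
        = insert (a + m - c) (Finset.Ico (a - c) (a + m - c)) := by
      ext y; simp only [Finset.mem_Ico, Finset.mem_insert]; push_cast; omega
    rw [this, Finset.sum_insert (by simp), ih]
    have e : a + ((m + 1 : ℕ) : ℤ) = (a + m) + 1 := by push_cast; ring
    rw [e, Ring.choose_succ_succ]
    simp only [sub_add_cancel]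
    ring

lemma choose_sum' (a b : ℤ) (h : a ≤ b) (i : ℕ) (c : ℤ) :
    ∑ y ∈ Finset.Ico (a - c) (b - c), Ring.choose (y + c) i
      = Ring.choose b (i + 1) - Ring.choose a (i + 1) := by
  obtain ⟨m, rfl⟩ := Int.le.dest h
  exact choose_sum a m i c

lemma edge_sum {n : ℕ} (T : NTree (n + 1)) (k : Fin (n + 1) → ℤ) (j : Fin n) (i : ℕ) :
    gtS T k j * ∑ y ∈ gtIco T k j, Ring.choose (y + (j.1 : ℤ) + 1) i
      = Ring.choose (gtX k (T.edge j).2) (i + 1) - Ring.choose (gtX k (T.edge j).1) (i + 1) := by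
  unfold gtS gtIco
  simp only [add_assoc]
  split_ifs with h
  · rw [choose_sum' _ _ h.le]; ring
  · rw [choose_sum' _ _ (not_lt.mp h)]; ring

/-- Augmented incidence matrix. -/
def gtM {n : ℕ} (T : NTree (n + 1)) : Matrix (Fin (n + 1)) (Fin (n + 1)) ℤ :=
  Matrix.of (Fin.cons (fun v => if v = 0 then 1 else 0)
    (fun (j : Fin n) v => (if v = (T.edge j).2 then 1 else 0) - (if v = (T.edge j).1 then 1 else 0)))

lemma det_edge {n : ℕ} (T : NTree (n + 1)) (k : Fin (n + 1) → ℤ) :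
    Matrix.det (Matrix.of fun (j i : Fin n) => Ring.choose (gtX k (T.edge j).2) (i.1 + 1)
      - Ring.choose (gtX k (T.edge j).1) (i.1 + 1)) = (gtM T).det * (gtB k).det := by
  have h0 : ∀ i, (gtM T * gtB k) 0 i = Ring.choose (gtX k 0) i.1 := by
    intro i
    simp [Matrix.mul_apply, gtM, gtB]
  have h1 : ∀ (j : Fin n) i, (gtM T * gtB k) j.succ i = Ring.choose (gtX k (T.edge j).2) i.1
      - Ring.choose (gtX k (T.edge j).1) i.1 := by
    intro j i
    simp [Matrix.mul_apply, gtM, gtB, sub_mul, Finset.sum_sub_distrib]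
  rw [← Matrix.det_mul, Matrix.det_succ_column_zero, Fin.sum_univ_succ]
  simp only [h0, h1]
  simp [Ring.choose_zero_right]
  congr 1
  ext j i
  simp [h1]

lemma step_sum {n : ℕ} (T : NTree (n + 1)) (k : Fin (n + 1) → ℤ) :
    (-1 : ℤ) ^ invCount T k * ∑ l ∈ Fintype.piFinset (gtIco T k), (gtB l).det
      = (gtM T).det * (gtB k).det := by
  rw [← det_edge, inv_sign]
  have h1 := (Matrix.detRowAlternating (n := Fin n) (R := ℤ)).toMultilinearMap.map_sum_finset
    (fun j (y : ℤ) (i : Fin n) => Ring.choose (y + (j.1 : ℤ) + 1) i.1) (gtIco T k)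
  have h2 := (Matrix.detRowAlternating (n := Fin n) (R := ℤ)).toMultilinearMap.map_smul_univ
    (gtS T k) (fun j => ∑ y ∈ gtIco T k j, fun (i : Fin n) => Ring.choose (y + (j.1 : ℤ) + 1) i.1)
  rw [h1] at h2
  refine Eq.trans h2.symm ?_
  change Matrix.det _ = _
  congr 1
  ext j i
  simp only [Pi.smul_apply, Finset.sum_apply, smul_eq_mul, Matrix.of_apply]
  exact edge_sum T k j i.1

/-- Extend a sequence by a top row. -/
def gtExt {n : ℕ} (k : Fin (n + 1) → ℤ) (L : ∀ i : Fin n, Fin (i.1 + 1) → ℤ) :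
    ∀ i : Fin (n + 1), Fin (i.1 + 1) → ℤ :=
  fun i => if h : i.1 < n then L ⟨i.1, h⟩ else fun j => k ⟨j.1, by omega⟩

lemma gtExt_castSucc {n : ℕ} (k : Fin (n + 1) → ℤ) (L : ∀ i : Fin n, Fin (i.1 + 1) → ℤ)
    (i : Fin n) : gtExt k L i.castSucc = L i := by
  simp [gtExt]

lemma gtExt_last {n : ℕ} (k : Fin (n + 1) → ℤ) (L : ∀ i : Fin n, Fin (i.1 + 1) → ℤ) :
    gtExt k L (Fin.last n) = k := by
  simp [gtExt]

lemma gtExt_inj {n : ℕ} (k : Fin (n + 1) → ℤ) : Function.Injective (gtExt k) := by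
  intro L L' h
  funext i
  rw [← gtExt_castSucc k L, h, gtExt_castSucc]

lemma gt_fwd {n : ℕ} (𝒯 : TreeSeq (n + 1)) (k : Fin (n + 1) → ℤ)
    (L : ∀ i : Fin (n + 1), Fin (i.1 + 1) → ℤ) (h : IsGTTreeSeq 𝒯 k L) :
    ∃ l, Admissible (𝒯 (Fin.last n)) k l ∧ ∃ L', IsGTTreeSeq (gtInit 𝒯) l L' ∧ gtExt k L' = L := by
  obtain ⟨h1, h2⟩ := h
  have hk : L (Fin.last n) = k := by
    funext j
    exact h1 (Fin.last n) rfl j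
  refine ⟨fun j => L ⟨n - 1, by omega⟩ ⟨j.1, by have := j.isLt; simp at this ⊢; omega⟩, ?_,
    fun i => L i.castSucc, ⟨?_, ?_⟩, ?_⟩
  · rcases Nat.eq_zero_or_pos n with h | h
    · subst h
      intro j
      exact absurd j.isLt (by simp)
    · have := h2 (Fin.last n) h
      rw [hk] at this
      exact this
  · intro i hi j
    obtain ⟨i, hi'⟩ := i
    have : i = n - 1 := by simp at hi; omega
    subst this
    rfl
  · intro i hi
    exact h2 i.castSucc hi
  · funext i
    refine Fin.lastCases ?_ (fun i => ?_) i
    · rw [gtExt_last, hk]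
    · rw [gtExt_castSucc]

lemma gt_bwd {n : ℕ} (𝒯 : TreeSeq (n + 1)) (k : Fin (n + 1) → ℤ) (l : Fin n → ℤ)
    (L : ∀ i : Fin n, Fin (i.1 + 1) → ℤ) (ha : Admissible (𝒯 (Fin.last n)) k l)
    (h : IsGTTreeSeq (gtInit 𝒯) l L) : IsGTTreeSeq 𝒯 k (gtExt k L) := by
  obtain ⟨h1, h2⟩ := h
  refine ⟨?_, ?_⟩
  · intro i hi j
    have : ¬ i.1 < n := by omega
    simp [gtExt, this]
  · intro i
    refine Fin.lastCases ?_ (fun i => ?_) i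
    · intro hi
      rw [gtExt_last]
      have hn : 0 < n := hi
      convert ha using 1
      funext j
      have := h1 ⟨n - 1, by omega⟩ (by simp; omega) ⟨j.1, by have := j.isLt; simp at this ⊢; omega⟩
      have e : (n - 1 < n) := by omega
      simpa [gtExt, e] using this
    · intro hi
      have := h2 i hi
      rw [gtExt_castSucc]
      have e : i.1 - 1 < n := by omega
      have e2 : gtExt k L ⟨i.1 - 1, by omega⟩ = L ⟨i.1 - 1, e⟩ := gtExt_castSucc k L ⟨i.1 - 1, e⟩
      change Admissible (𝒯 i.castSucc) (L i)
        (fun j => gtExt k L ⟨i.1 - 1, by omega⟩ ⟨j.1, _⟩)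
      rw [e2]
      exact this

lemma gtSign_ext {n : ℕ} (𝒯 : TreeSeq (n + 1)) (k : Fin (n + 1) → ℤ)
    (L : ∀ i : Fin n, Fin (i.1 + 1) → ℤ) :
    gtSign 𝒯 (gtExt k L) = (-1) ^ invCount (𝒯 (Fin.last n)) k * treeSign (𝒯 (Fin.last n)) *
      gtSign (gtInit 𝒯) L := by
  unfold gtSign
  rw [Fin.sum_univ_castSucc, Fin.prod_univ_castSucc, gtExt_last]
  simp only [gtExt_castSucc]
  rw [pow_add]
  unfold gtInit
  ring_nf

lemma gt_main_s7 : ∀ (n : ℕ) (𝒯 : TreeSeq n), ∃ c : ℤ, ∀ k,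
    {L | IsGTTreeSeq 𝒯 k L}.Finite ∧ Lsum 𝒯 k = c * (gtB k).det := by
  intro n
  induction n with
  | zero =>
    intro 𝒯
    refine ⟨Lsum 𝒯 Fin.elim0, fun k => ⟨Set.toFinite _, ?_⟩⟩
    rw [Subsingleton.elim k Fin.elim0]
    simp
  | succ n ih =>
    intro 𝒯
    obtain ⟨c, hc⟩ := ih (gtInit 𝒯)
    refine ⟨treeSign (𝒯 (Fin.last n)) * c * (gtM (𝒯 (Fin.last n))).det, fun k => ?_⟩
    set I : Finset (Fin n → ℤ) := Fintype.piFinset (gtIco (𝒯 (Fin.last n)) k) with hI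
    have hset : {L | IsGTTreeSeq 𝒯 k L} =
        ⋃ l ∈ (I : Set (Fin n → ℤ)), gtExt k '' {L' | IsGTTreeSeq (gtInit 𝒯) l L'} := by
      ext L
      simp only [Set.mem_ofPred_eq, Set.mem_iUnion, Set.mem_image, exists_prop, Finset.mem_coe]
      constructor
      · intro h
        obtain ⟨l, ha, L', hL, e⟩ := gt_fwd 𝒯 k L h
        exact ⟨l, (mem_box _ _ _).2 ha, L', hL, e⟩
      · rintro ⟨l, ha, L', hL, rfl⟩
        exact gt_bwd 𝒯 k l L' ((mem_box _ _ _).1 ha) hL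
    have hfin : ∀ l ∈ (I : Set (Fin n → ℤ)),
        (gtExt k '' {L' | IsGTTreeSeq (gtInit 𝒯) l L'}).Finite :=
      fun l _ => (hc l).1.image _
    refine ⟨?_, ?_⟩
    · rw [hset]
      exact Set.Finite.biUnion I.finite_toSet hfin
    · unfold Lsum
      rw [hset, finsum_mem_biUnion _ I.finite_toSet hfin]
      · have : ∀ l, ∑ᶠ L ∈ gtExt k '' {L' | IsGTTreeSeq (gtInit 𝒯) l L'}, gtSign 𝒯 L
            = (-1) ^ invCount (𝒯 (Fin.last n)) k * treeSign (𝒯 (Fin.last n)) *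
              (c * (gtB l).det) := by
          intro l
          rw [finsum_mem_image (gtExt_inj k).injOn, ← (hc l).2]
          unfold Lsum
          simp only [gtSign_ext]
          exact (mul_finsum_mem' _ _ (hc l).1).symm
        simp only [this]
        rw [finsum_mem_coe_finset, ← Finset.mul_sum, ← Finset.mul_sum]
        have key : ∀ a t d b x s : ℤ, a * s = d * b → x = s →
            a * t * (c * x) = t * c * d * b := by
          intro a t d b x s h e
          subst e
          linear_combination (t * c) * h
        exact key _ _ _ _ _ _ (step_sum (𝒯 (Fin.last n)) k) rfl
      · intro l _ l' _ hne
        refine Set.disjoint_left.2 ?_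
        rintro _ ⟨L, hL, rfl⟩ ⟨L', hL', e⟩
        have := gtExt_inj k e
        subst this
        apply hne
        funext j
        have hj := j.isLt
        have a := hL.1 ⟨n - 1, by omega⟩ (by simp; omega) ⟨j.1, by simp; omega⟩
        have b := hL'.1 ⟨n - 1, by omega⟩ (by simp; omega) ⟨j.1, by simp; omega⟩
        exact a.symm.trans b

/-- Matrix with difference rows on `S`. -/
noncomputable def gtD {n : ℕ} (S : Finset (Fin n)) (k : Fin n → ℤ) : Matrix (Fin n) (Fin n) ℚ :=
  Matrix.of fun v i => if v ∈ S then
    ((Ring.choose (gtX k v + 1) i.1 : ℤ) : ℚ) - ((Ring.choose (gtX k v) i.1 : ℤ) : ℚ)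
    else ((Ring.choose (gtX k v) i.1 : ℤ) : ℚ)

lemma gtX_kup {n : ℕ} (k : Fin n → ℤ) (a v : Fin n) :
    gtX (kup k a 1) v = if v = a then gtX k v + 1 else gtX k v := by
  unfold gtX kup
  split_ifs <;> ring

lemma delta_step {n : ℕ} (c : ℚ) (S : Finset (Fin n)) (a : Fin n) (ha : a ∉ S) :
    DeltaOp n a (fun k => c * (gtD S k).det) = fun k => c * (gtD (insert a S) k).det := by
  funext k
  unfold DeltaOp
  have h1 : gtD (insert a S) k = (gtD S k).updateRow a
      ((gtD S (kup k a 1) a) + (-1 : ℚ) • (gtD S k a)) := by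
    ext v i
    by_cases h : v = a
    · subst h
      simp [gtD, gtX_kup, ha]; ring
    · simp [gtD, Matrix.updateRow_ne h, h]
  have h2 : gtD S (kup k a 1) = (gtD S k).updateRow a (gtD S (kup k a 1) a) := by
    ext v i
    by_cases h : v = a
    · subst h
      simp
    · simp [gtD, Matrix.updateRow_ne h, h, gtX_kup]
  rw [h1, Matrix.det_updateRow_add, Matrix.det_updateRow_smul, ← h2, Matrix.updateRow_eq_self]
  ring

lemma opProd_eq {n : ℕ} (c : ℚ) (S : Finset (Fin n)) :
    opProd n (DeltaOp n) S (fun k => c * (gtD ∅ k).det) = fun k => c * (gtD S k).det := by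
  have key : ∀ l : List (Fin n), l.Nodup →
      l.foldr (fun i f => DeltaOp n i ∘ f) id (fun k => c * (gtD ∅ k).det)
        = fun k => c * (gtD l.toFinset k).det := by
    intro l
    induction l with
    | nil => intro _; rfl
    | cons a l ih =>
      intro h
      rw [List.nodup_cons] at h
      rw [List.foldr_cons, Function.comp_apply, ih h.2, delta_step _ _ _ (by simpa using h.1),
        List.toFinset_cons]
  have := key S.toList S.nodup_toList
  rwa [Finset.toList_toFinset] at this

lemma det_shift {n : ℕ} (k : Fin n → ℤ) (t : ℚ) :
    ∑ S : Finset (Fin n), t ^ S.card * (gtD S k).det = (gtD ∅ k).det := by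
  let D1 : Fin n → Fin n → ℚ := fun v i =>
    ((Ring.choose (gtX k v + 1) i.1 : ℤ) : ℚ) - ((Ring.choose (gtX k v) i.1 : ℤ) : ℚ)
  let D0 : Fin n → Fin n → ℚ := fun v i => ((Ring.choose (gtX k v) i.1 : ℤ) : ℚ)
  have h1 := (Matrix.detRowAlternating (n := Fin n) (R := ℚ)).toMultilinearMap.map_add_univ
    (fun v => t • D1 v) D0
  have h2 : ∀ S : Finset (Fin n), (Matrix.detRowAlternating (n := Fin n) (R := ℚ)).toMultilinearMap
      (S.piecewise (fun v => t • D1 v) D0) = t ^ S.card * (gtD S k).det := by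
    intro S
    have h3 := (Matrix.detRowAlternating (n := Fin n) (R := ℚ)).toMultilinearMap.map_piecewise_smul
      (fun _ => t) (fun v i => if v ∈ S then D1 v i else D0 v i) S
    rw [Finset.prod_const, smul_eq_mul] at h3
    refine Eq.trans (congrArg _ ?_) h3
    funext v i
    by_cases h : v ∈ S <;> simp [Finset.piecewise, h]
  simp only [h2] at h1
  rw [← h1]
  cases n with
  | zero => exact (Matrix.det_isEmpty).trans (Matrix.det_isEmpty).symm
  | succ n =>
    symm
    refine Matrix.det_eq_of_forall_col_eq_smul_add_pred (fun _ => -t) ?_ ?_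
    · intro v
      change gtD ∅ k v 0 = t * D1 v 0 + D0 v 0
      simp [gtD, D1, D0]
    · intro v i
      change gtD ∅ k v i.succ = t * D1 v i.succ + D0 v i.succ + -t * gtD ∅ k v i.castSucc
      simp [gtD, D1, D0, Ring.choose_succ_succ]

/-- For `ρ ≥ 1`, the operator `e_ρ(Δ_1, …, Δ_n)` annihilates `k ↦ L_n(𝒯, k)`. -/
theorem gt_tree_sequence_esymm_delta (n : ℕ) (hn : 1 ≤ n)
    (𝒯 : TreeSeq n) (ρ : ℕ) (hρ : 1 ≤ ρ) :
    esymmOp n ρ (DeltaOp n) (fun k => (Lsum 𝒯 k : ℚ)) = 0 := by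
  obtain ⟨c, hc⟩ := gt_main_s7 n 𝒯
  have hA : (fun k => (Lsum 𝒯 k : ℚ)) = fun k => (c : ℚ) * (gtD ∅ k).det := by
    funext k
    rw [(hc k).2, Int.cast_mul]
    congr 1
    have := (Int.castRingHom ℚ).map_det (gtB k)
    refine this.trans (congrArg _ ?_)
    ext v i
    simp [gtB, gtD]
  rw [hA]
  funext k
  unfold esymmOp
  simp only [opProd_eq, Pi.zero_apply]
  rw [← Finset.mul_sum]
  have hp : (∑ S : Finset (Fin n), Polynomial.C (gtD S k).det * Polynomial.X ^ S.card)
      = Polynomial.C (gtD ∅ k).det := by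
    refine Polynomial.funext fun t => ?_
    rw [Polynomial.eval_finsetSum, Polynomial.eval_C, ← det_shift k t]
    refine Finset.sum_congr rfl fun S _ => ?_
    rw [Polynomial.eval_mul, Polynomial.eval_C, Polynomial.eval_pow, Polynomial.eval_X, mul_comm]
  have hq := congrArg (fun p => Polynomial.coeff p ρ) hp
  simp only [Polynomial.finsetSum_coeff, Polynomial.coeff_C_mul_X_pow, Polynomial.coeff_C] at hq
  rw [if_neg (by omega), ← Finset.sum_filter] at hq
  have hf : Finset.powersetCard ρ (Finset.univ : Finset (Fin n))
      = Finset.univ.filter (fun S => ρ = S.card) := by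
    ext S
    simp [Finset.mem_powersetCard, eq_comm]
  rw [hf, hq, mul_zero]
end

section
/- Let n ≥ 1 and let α : ℤ^n → ℚ be the restriction of a polynomial in n variables. Suppose that (i) for every i ∈ {1,...,n−1} and every k ∈ ℤ^n, g(k) + g(k') = 0, where g = V_i α is defined by (V_i α)(k) = α(k − e_i) + α(k + e_{i+1}) − α(k − e_i + e_{i+1}) and k' is obtained from k by replacing (k_i, k_{i+1}) with (k_{i+1} + 1, k_i − 1); and (ii) e_ρ(Δ_1,...,Δ_n) α = 0 for all ρ with 1 ≤ ρ ≤ n. Then for all (k_1,...,k_n) ∈ ℤ^n, α(k_1, k_2, ..., k_n) = (−1)^{n−1} · α(k_2, k_3, ..., k_n, k_1 − n). -/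
/-- `(V_i α)(k) = α(k - e_i) + α(k + e_{i+1}) - α(k - e_i + e_{i+1})`, i.e. the operator
`V_{k_i, k_{i+1}} = E_{k_i}⁻¹ + E_{k_{i+1}} - E_{k_i}⁻¹ E_{k_{i+1}}` applied to `α`. -/
def Vop {n : ℕ} (α : (Fin n → ℤ) → ℚ) (i i' : Fin n) (k : Fin n → ℤ) : ℚ :=
  α (kup k i (-1)) + α (kup k i' 1) - α (kup (kup k i (-1)) i' 1)

/-- `swapShift k i i'` replaces `(k_i, k_{i'})` by `(k_{i'} + 1, k_i - 1)`. -/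
def swapShift {n : ℕ} (k : Fin n → ℤ) (i i' : Fin n) : Fin n → ℤ :=
  fun j => if j = i then k i' + 1 else if j = i' then k i - 1 else k j

/-- Functions `ℤ^n → ℚ`. -/
abbrev Fn (n : ℕ) := (Fin n → ℤ) → ℚ

/-- Laurent polynomials in the shifts. -/
abbrev LA (n : ℕ) := AddMonoidAlgebra ℚ (Fin n → ℤ)

/-- Translation of functions. -/
def transHom (n : ℕ) : Multiplicative (Fin n → ℤ) →* Module.End ℚ (Fn n) where
  toFun v :=
    { toFun := fun f k => f (k + v.toAdd)
      map_add' := fun f g => rfl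
      map_smul' := fun c f => rfl }
  map_one' := by
    ext f k
    simp
  map_mul' u v := by
    ext f k
    simp [add_assoc, add_comm, add_left_comm]

/-- The action of Laurent polynomials in the shifts. -/
noncomputable def act (n : ℕ) : LA n →ₐ[ℚ] Module.End ℚ (Fn n) :=
  AddMonoidAlgebra.lift ℚ (Module.End ℚ (Fn n)) (Fin n → ℤ) (transHom n)

/-- The shift `E_i` to the power `t`. -/
noncomputable def sh {n : ℕ} (i : Fin n) (t : ℤ) : LA n :=
  AddMonoidAlgebra.single (Pi.single i t) 1

/-- The element for `V`. -/
noncomputable def VA {n : ℕ} (i j : Fin n) : LA n := sh i (-1) + sh j 1 - sh i (-1) * sh j 1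

theorem kup_eq {n : ℕ} (k : Fin n → ℤ) (i : Fin n) (t : ℤ) : kup k i t = k + Pi.single i t := by
  ext j
  by_cases h : j = i
  · subst h; simp [kup]
  · simp [kup, h]

theorem act_single {n : ℕ} (v : Fin n → ℤ) (f : Fn n) (k : Fin n → ℤ) :
    act n (AddMonoidAlgebra.single v 1) f k = f (k + v) := by
  unfold act
  rw [AddMonoidAlgebra.lift_single, one_smul]
  rfl

theorem act_sh {n : ℕ} (i : Fin n) (t : ℤ) (f : Fn n) (k : Fin n → ℤ) :
    act n (sh i t) f k = f (kup k i t) := by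
  rw [sh, act_single, kup_eq]

theorem act_VA {n : ℕ} (i j : Fin n) (f : Fn n) (k : Fin n → ℤ) :
    act n (VA i j) f k = Vop f i j k := by
  simp only [VA, map_sub, map_add, map_mul, LinearMap.sub_apply, LinearMap.add_apply,
    Pi.sub_apply, Pi.add_apply, Module.End.mul_apply, act_sh, Vop]

theorem sh_cancel {n : ℕ} (i : Fin n) : sh i (-1) * sh i 1 = (1 : LA n) := by
  rw [sh, sh, AddMonoidAlgebra.single_mul_single, AddMonoidAlgebra.one_def, ← Pi.single_add]
  simp

theorem VA_eq {n : ℕ} (i j : Fin n) : VA i j = 1 + (1 - sh i (-1)) * (sh j 1 - 1) := by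
  rw [VA]; ring

theorem VA_eq2 {n : ℕ} (i j : Fin n) :
    sh i 1 * VA i j = 1 + sh j 1 * (sh i 1 - 1) := by
  have h := sh_cancel i
  rw [VA]
  linear_combination (1 - sh j 1) * h

theorem prod_sh {n : ℕ} : (∏ i : Fin n, sh i 1) = AddMonoidAlgebra.single (fun _ => (1:ℤ)) 1 := by
  have h : ∀ S : Finset (Fin n), (∏ i ∈ S, sh i 1 : LA n)
      = AddMonoidAlgebra.single (∑ i ∈ S, Pi.single i 1) 1 := by
    intro S
    induction S using Finset.induction_on with
    | empty => simp [AddMonoidAlgebra.one_def]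
    | insert a S ha ih =>
      rw [Finset.prod_insert ha, Finset.sum_insert ha, ih, sh,
        AddMonoidAlgebra.single_mul_single, one_mul]
  rw [h]
  congr 1
  exact Finset.univ_sum_single (fun _ : Fin n => (1:ℤ))

theorem act_Delta {n : ℕ} (i : Fin n) (f : Fn n) : act n (sh i 1 - 1) f = DeltaOp n i f := by
  ext k
  simp only [map_sub, map_one, LinearMap.sub_apply, Pi.sub_apply, act_sh, DeltaOp,
    Module.End.one_apply]

theorem opProd_eq_s11 {n : ℕ} (S : Finset (Fin n)) (f : Fn n) :
    opProd n (DeltaOp n) S f = act n (∏ i ∈ S, (sh i 1 - 1)) f := by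
  rw [← Finset.prod_map_toList, opProd]
  induction S.toList with
  | nil => simp
  | cons a l ih =>
    rw [List.foldr_cons, Function.comp_apply, ih, List.map_cons, List.prod_cons, map_mul,
      Module.End.mul_apply, act_Delta]

theorem prod_act {n : ℕ} (α : Fn n)
    (h2 : ∀ ρ : ℕ, 1 ≤ ρ → ρ ≤ n → esymmOp n ρ (DeltaOp n) α = 0) (c : LA n) :
    act n (∏ j : Fin n, (1 + c * (sh j 1 - 1))) α = α := by
  rw [Finset.prod_one_add, Finset.sum_powerset, map_sum, LinearMap.sum_apply,
    Finset.sum_range_succ']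
  have hz : ∀ ρ ∈ Finset.range (Finset.univ : Finset (Fin n)).card,
      act n (∑ t ∈ Finset.powersetCard (ρ + 1) Finset.univ, ∏ j ∈ t, c * (sh j 1 - 1)) α = 0 := by
    intro ρ hρ
    have hρ' : ρ < n := by simpa using hρ
    have e : (∑ t ∈ Finset.powersetCard (ρ + 1) (Finset.univ : Finset (Fin n)),
        ∏ j ∈ t, c * (sh j 1 - 1))
        = c ^ (ρ + 1) * ∑ t ∈ Finset.powersetCard (ρ + 1) (Finset.univ : Finset (Fin n)),
          ∏ j ∈ t, (sh j 1 - 1) := by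
      rw [Finset.mul_sum]
      refine Finset.sum_congr rfl fun t ht => ?_
      rw [Finset.prod_mul_distrib, Finset.prod_const, (Finset.mem_powersetCard.1 ht).2]
    have e2 : act n (∑ t ∈ Finset.powersetCard (ρ + 1) (Finset.univ : Finset (Fin n)),
          ∏ j ∈ t, (sh j 1 - 1)) α = 0 := by
      rw [← h2 (ρ + 1) (by omega) (by omega)]
      ext k
      simp only [esymmOp, map_sum, LinearMap.sum_apply, Finset.sum_apply, opProd_eq_s11]
    rw [e, map_mul, Module.End.mul_apply, e2, map_zero]
  rw [Finset.sum_eq_zero hz]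
  simp

/-- `D_m k` moves `k_0` to position `m`. -/
def Dm {n m : ℕ} (hm : m < n) (k : Fin n → ℤ) : Fin n → ℤ :=
  fun j => if h : j.1 < m then k ⟨j.1 + 1, by omega⟩ + 1
    else if j.1 = m then k ⟨0, by omega⟩ - m else k j

theorem Dm_swap {n m : ℕ} (hm : m + 1 < n) (k : Fin n → ℤ) :
    swapShift (Dm (Nat.lt_of_succ_lt hm) k) ⟨m, Nat.lt_of_succ_lt hm⟩ ⟨m + 1, hm⟩ = Dm hm k := by
  ext ⟨j, hj⟩
  simp only [swapShift, Dm, Fin.mk.injEq]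
  split_ifs <;> first | omega | (subst_vars; push_cast; first | rfl | ring | (exfalso; omega))

theorem Dm_kup0 {n m : ℕ} (hm : m < n) (k : Fin n → ℤ) (t : ℤ) :
    kup (Dm hm k) ⟨m, hm⟩ t = Dm hm (kup k ⟨0, by omega⟩ t) := by
  ext ⟨j, hj⟩
  simp only [kup, Dm, Fin.mk.injEq]
  split_ifs <;> first | contradiction | omega | (subst_vars; first | rfl | ring | (exfalso; omega))

theorem Dm_kup1 {n m : ℕ} (hm : m + 1 < n) (k : Fin n → ℤ) (t : ℤ) :
    kup (Dm (Nat.lt_of_succ_lt hm) k) ⟨m + 1, hm⟩ t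
      = Dm (Nat.lt_of_succ_lt hm) (kup k ⟨m + 1, hm⟩ t) := by
  ext ⟨j, hj⟩
  simp only [kup, Dm, Fin.mk.injEq]
  split_ifs <;> first | contradiction | omega | (subst_vars; first | rfl | ring | (exfalso; omega))

theorem Dm_kup2 {n m : ℕ} (hm : m + 1 < n) (k : Fin n → ℤ) (t : ℤ) :
    kup (Dm hm k) ⟨m, Nat.lt_of_succ_lt hm⟩ t = Dm hm (kup k ⟨m + 1, hm⟩ t) := by
  ext ⟨j, hj⟩
  simp only [kup, Dm, Fin.mk.injEq]
  split_ifs <;> first | contradiction | omega | (subst_vars; first | rfl | ring | (exfalso; omega))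

/-- Partial product over indices `1..m`. -/
noncomputable def pprod {n : ℕ} (f : Fin n → LA n) (m : ℕ) : LA n :=
  ∏ j ∈ Finset.range m, if h : j + 1 < n then f ⟨j + 1, h⟩ else 1

theorem pprod_succ {n m : ℕ} (f : Fin n → LA n) (hm : m + 1 < n) :
    pprod f (m + 1) = pprod f m * f ⟨m + 1, hm⟩ := by
  rw [pprod, Finset.prod_range_succ, dif_pos hm, pprod]

theorem pprod_full {n : ℕ} (hn : 1 ≤ n) (f : Fin n → LA n) :
    f ⟨0, hn⟩ * pprod f (n - 1) = ∏ j, f j := by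
  obtain ⟨N, rfl⟩ : ∃ N, n = N + 1 := ⟨n - 1, by omega⟩
  rw [Fin.prod_univ_succ, pprod, Nat.add_sub_cancel, Finset.prod_range]
  congr 1
  refine Finset.prod_congr rfl fun j _ => ?_
  rw [dif_pos (by omega)]
  rfl

theorem step {n : ℕ} (hn : 1 ≤ n) (α : Fn n)
    (h1 : ∀ i : Fin n, ∀ hi : i.1 + 1 < n, ∀ k : Fin n → ℤ,
      Vop α i ⟨i.1 + 1, hi⟩ k + Vop α i ⟨i.1 + 1, hi⟩ (swapShift k i ⟨i.1 + 1, hi⟩) = 0)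
    {m : ℕ} (hm : m + 1 < n) :
    act n (VA ⟨m + 1, hm⟩ ⟨0, hn⟩) (fun k => α (Dm hm k))
      = - act n (VA ⟨0, hn⟩ ⟨m + 1, hm⟩) (fun k => α (Dm (Nat.lt_of_succ_lt hm) k)) := by
  ext k
  have h := h1 ⟨m, Nat.lt_of_succ_lt hm⟩ hm (Dm (Nat.lt_of_succ_lt hm) k)
  rw [Dm_swap] at h
  simp only [Vop, Dm_kup0, Dm_kup1, Dm_kup2] at h
  rw [Pi.neg_apply, act_VA, act_VA]
  simp only [Vop]
  linarith

theorem steps {n : ℕ} (hn : 1 ≤ n) (α : Fn n)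
    (h1 : ∀ i : Fin n, ∀ hi : i.1 + 1 < n, ∀ k : Fin n → ℤ,
      Vop α i ⟨i.1 + 1, hi⟩ k + Vop α i ⟨i.1 + 1, hi⟩ (swapShift k i ⟨i.1 + 1, hi⟩) = 0)
    (m : ℕ) (hm : m < n) :
    act n (pprod (fun j => VA j ⟨0, hn⟩) m) (fun k => α (Dm hm k))
      = (-1 : ℚ) ^ m • act n (pprod (fun j => VA ⟨0, hn⟩ j) m) α := by
  induction m with
  | zero =>
    have : (fun k => α (Dm hm k)) = α := by
      ext k
      congr 1
      ext j
      simp only [Dm]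
      split_ifs with h h'
      · omega
      · have : j = ⟨0, hn⟩ := Fin.ext h'
        subst this
        simp
      · rfl
    simp [pprod, this]
  | succ m ih =>
    rw [pprod_succ _ hm, pprod_succ _ hm, map_mul, Module.End.mul_apply, step hn α h1 hm, map_neg,
      ← Module.End.mul_apply, ← map_mul, mul_comm, map_mul, Module.End.mul_apply, ih, map_smul,
      ← Module.End.mul_apply, ← map_mul, mul_comm, pow_succ]
    simp

theorem inj_of_nil {n : ℕ} (c d : LA n) (m : ℕ) (γ : Fn n)
    (hd : act n (d ^ m) γ = 0) (h : act n (1 + c * d) γ = 0) : γ = 0 := by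
  obtain ⟨q, hq⟩ := sub_dvd_pow_sub_pow (1 : LA n) (-(c * d)) m
  have e : (1 : LA n) = q * (1 + c * d) + ((-c) ^ m) * d ^ m := by
    rw [← mul_pow]
    rw [one_pow] at hq
    rw [neg_mul]
    linear_combination hq
  have : γ = act n 1 γ := by simp
  rw [this, e, map_add, LinearMap.add_apply, map_mul, map_mul, Module.End.mul_apply,
    Module.End.mul_apply, h, hd]
  simp

theorem prod_inj {n : ℕ} (z : Fin n) (S : Finset (Fin n)) (m : ℕ) (γ : Fn n)
    (hd : act n ((sh z 1 - 1) ^ m) γ = 0) (h : act n (∏ j ∈ S, VA j z) γ = 0) : γ = 0 := by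
  induction S using Finset.induction_on with
  | empty => simpa using h
  | insert a S ha ih =>
    apply ih
    rw [Finset.prod_insert ha, map_mul, Module.End.mul_apply, VA_eq] at h
    refine inj_of_nil _ _ m _ ?_ h
    rw [← Module.End.mul_apply, ← map_mul, mul_comm, map_mul, Module.End.mul_apply, hd, map_zero]

theorem nil_mono {n : ℕ} (d : LA n) {m m' : ℕ} (hmm : m ≤ m') (γ : Fn n)
    (hd : act n (d ^ m) γ = 0) : act n (d ^ m') γ = 0 := by
  obtain ⟨c, rfl⟩ := Nat.exists_eq_add_of_le' hmm
  rw [pow_add, map_mul, Module.End.mul_apply, hd, map_zero]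

theorem nil_mulX {n : ℕ} (i z : Fin n) (m : ℕ) (f : Fn n)
    (hd : act n ((sh z 1 - 1) ^ m) f = 0) :
    act n ((sh z 1 - 1) ^ (m + 1)) (fun k => f k * (k i : ℚ)) = 0 := by
  induction m generalizing f with
  | zero =>
    have : f = 0 := by simpa using hd
    subst this
    have : (fun k : Fin n → ℤ => (0 : Fn n) k * (k i : ℚ)) = 0 := by ext k; simp
    rw [this, map_zero]
  | succ m ih =>
    have key : act n (sh z 1 - 1) (fun k => f k * (k i : ℚ))
        = (fun k => (act n (sh z 1 - 1) f) k * (k i : ℚ))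
          + (if i = z then (1:ℚ) else 0) • act n (sh z 1) f := by
      rw [act_Delta, act_Delta]
      ext k
      simp only [DeltaOp, Pi.add_apply, Pi.smul_apply, act_sh, smul_eq_mul]
      have : kup k z 1 i = k i + (if i = z then 1 else 0) := by
        simp only [kup]; split_ifs <;> simp
      rw [this]
      split_ifs <;> push_cast <;> ring
    rw [pow_succ, map_mul, Module.End.mul_apply, key, map_add, map_smul, ih, 
      ← Module.End.mul_apply, ← map_mul, mul_comm, map_mul, Module.End.mul_apply, hd]
    · simp
    · rw [← Module.End.mul_apply, ← map_mul, ← pow_succ, hd]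

theorem nil_poly {n : ℕ} (z : Fin n) (P : MvPolynomial (Fin n) ℚ) :
    ∃ m, act n ((sh z 1 - 1) ^ m) (fun k => MvPolynomial.eval (fun j => (k j : ℚ)) P) = 0 := by
  induction P using MvPolynomial.induction_on with
  | C a =>
    refine ⟨1, ?_⟩
    rw [pow_one, act_Delta]
    ext k
    simp [DeltaOp]
  | add p q hp hq =>
    obtain ⟨a, ha⟩ := hp
    obtain ⟨b, hb⟩ := hq
    refine ⟨a + b, ?_⟩
    have : (fun k : Fin n → ℤ => MvPolynomial.eval (fun j => (k j : ℚ)) (p + q))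
      = (fun k => MvPolynomial.eval (fun j => (k j : ℚ)) p)
        + (fun k => MvPolynomial.eval (fun j => (k j : ℚ)) q) := by
      ext k; simp
    rw [this, map_add, nil_mono _ (Nat.le_add_right a b) _ ha,
      nil_mono _ (Nat.le_add_left b a) _ hb, add_zero]
  | mul_X p i hp =>
    obtain ⟨a, ha⟩ := hp
    refine ⟨a + 1, ?_⟩
    simpa using nil_mulX i z a _ ha

theorem nil_Dm {n m : ℕ} (hm : m < n) (f : Fn n) (r : ℕ) :
    act n ((sh ⟨0, by omega⟩ 1 - 1) ^ r) (fun k => f (Dm hm k))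
      = fun k => act n ((sh ⟨m, hm⟩ 1 - 1) ^ r) f (Dm hm k) := by
  induction r generalizing f with
  | zero => simp
  | succ r ih =>
    rw [pow_succ, pow_succ, map_mul, map_mul, Module.End.mul_apply, Module.End.mul_apply, ← ih]
    congr 1
    rw [act_Delta, act_Delta]
    ext k
    simp only [DeltaOp, Dm_kup0]

/-- If `α : ℤ^n → ℚ` is the restriction of a polynomial, satisfies
`(V_i α)(k) + (V_i α)(k') = 0` for each `i`, where `k'` replaces `(k_i, k_{i+1})` by
`(k_{i+1} + 1, k_i - 1)`, and is annihilated by `e_ρ(Δ_1, …, Δ_n)` for `1 ≤ ρ ≤ n`,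
then `α(k_1, …, k_n) = (-1)^{n-1} α(k_2, …, k_n, k_1 - n)`. -/
theorem alpha_cyclic_identity (n : ℕ) (hn : 1 ≤ n) (α : (Fin n → ℤ) → ℚ)
    (hpoly : ∃ P : MvPolynomial (Fin n) ℚ,
      ∀ k : Fin n → ℤ, α k = MvPolynomial.eval (fun j => (k j : ℚ)) P)
    (h1 : ∀ i : Fin n, ∀ hi : i.1 + 1 < n, ∀ k : Fin n → ℤ,
      Vop α i ⟨i.1 + 1, hi⟩ k + Vop α i ⟨i.1 + 1, hi⟩ (swapShift k i ⟨i.1 + 1, hi⟩) = 0)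
    (h2 : ∀ ρ : ℕ, 1 ≤ ρ → ρ ≤ n → esymmOp n ρ (DeltaOp n) α = 0) :
    ∀ k : Fin n → ℤ,
      α k = (-1 : ℚ) ^ (n - 1) *
        α (fun j => if h : j.1 + 1 < n then k ⟨j.1 + 1, h⟩ else k ⟨0, by omega⟩ - (n : ℤ)) := by
  intro k
  obtain ⟨P, hP⟩ := hpoly
  have hα : α = fun k => MvPolynomial.eval (fun j => (k j : ℚ)) P := funext hP
  have hlt : n - 1 < n := by omega
  -- the full shift fixes `α`
  have hE : act n (∏ j : Fin n, sh j 1) α = α := by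
    have h := prod_act α h2 1
    simpa using h
  have hA : act n (∏ j, VA ⟨0, hn⟩ j) α = α := by
    simp only [VA_eq]
    exact prod_act α h2 _
  have hB : act n (∏ j, VA j ⟨0, hn⟩) α = α := by
    have h := prod_act α h2 (sh ⟨0, hn⟩ 1)
    simp only [← VA_eq2] at h
    rw [Finset.prod_mul_distrib, mul_comm, map_mul, Module.End.mul_apply, hE] at h
    exact h
  have hS := congrArg (act n (VA ⟨0, hn⟩ ⟨0, hn⟩)) (steps hn α h1 (n - 1) hlt)
  rw [map_smul, ← Module.End.mul_apply, ← Module.End.mul_apply, ← map_mul, ← map_mul,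
    pprod_full hn (fun j => VA j ⟨0, hn⟩), pprod_full hn (fun j => VA ⟨0, hn⟩ j), hA] at hS
  obtain ⟨a, ha⟩ := nil_poly ⟨0, hn⟩ P
  obtain ⟨b, hb⟩ := nil_poly ⟨n - 1, hlt⟩ P
  rw [← hα] at ha hb
  have hG : act n ((sh ⟨0, hn⟩ 1 - 1) ^ b) (fun k => α (Dm hlt k)) = 0 := by
    rw [nil_Dm, hb]
    rfl
  have hz : (fun k => α (Dm hlt k)) - (-1 : ℚ) ^ (n - 1) • α = 0 := by
    refine prod_inj ⟨0, hn⟩ Finset.univ (a + b) _ ?_ ?_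
    · rw [map_sub, map_smul, nil_mono _ (Nat.le_add_right a b) _ ha,
        nil_mono _ (Nat.le_add_left b a) _ hG, smul_zero, sub_zero]
    · rw [map_sub, map_smul, hS, hB, sub_self]
  have hk := congrFun hz k
  simp only [Pi.sub_apply, Pi.smul_apply, smul_eq_mul, Pi.zero_apply] at hk
  have hT : α (Dm hlt k) = α (fun j => if h : j.1 + 1 < n then k ⟨j.1 + 1, h⟩
      else k ⟨0, by omega⟩ - (n : ℤ)) := by
    conv_rhs => rw [← hE, prod_sh, act_single]
    congr 1
    ext j
    simp only [Dm, Pi.add_apply]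
    split_ifs <;> first | omega | rfl
  rw [← hT]
  have hs : (-1 : ℚ) ^ (n - 1) * (-1 : ℚ) ^ (n - 1) = 1 := by
    rw [← mul_pow]; simp
  linear_combination (-(-1 : ℚ) ^ (n - 1)) * hk - α k * hs
end

section
/- Let n ≥ 1 and let P be a polynomial in n variables with rational coefficients such that for every strictly increasing (k_1 < k_2 < ... < k_n) ∈ ℤ^n, P(k_1,...,k_n) equals the number of monotone triangles of order n with bottom row a_{n,j} = k_j. Then for every weakly increasing (k_1 ≤ k_2 ≤ ... ≤ k_n) ∈ ℤ^n, P(k_1,...,k_n) equals the number of triangular integer arrays (a_{i,j})_{1 ≤ j ≤ i ≤ n} with a_{n,j} = k_j, with a_{i+1,j} ≤ a_{i,j} ≤ a_{i+1,j+1} for all 1 ≤ j ≤ i ≤ n−1, and with a_{i,j} < a_{i,j+1} for all 1 ≤ j < i ≤ n−1 (i.e., all rows except possibly the bottom row are strictly increasing). -/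
/-- Every row of the triangular array is strictly increasing. -/
def StrictRows {n : ℕ} (a : ∀ i : Fin n, Fin (i.1 + 1) → ℤ) : Prop :=
  ∀ i : Fin n, ∀ j : Fin (i.1 + 1), ∀ h : j.1 + 1 < i.1 + 1, a i j < a i ⟨j.1 + 1, h⟩

/-- Every row except possibly the bottom row is strictly increasing. -/
def StrictRowsAboveBottom {n : ℕ} (a : ∀ i : Fin n, Fin (i.1 + 1) → ℤ) : Prop :=
  ∀ i : Fin n, i.1 + 1 < n →
    ∀ j : Fin (i.1 + 1), ∀ h : j.1 + 1 < i.1 + 1, a i j < a i ⟨j.1 + 1, h⟩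

/-- Triangles with all rows but the bottom one strict, and bottom row `k`. -/
abbrev MTW (n : ℕ) (k : Fin n → ℤ) : Type :=
  {a : ∀ i : Fin n, Fin (i.1 + 1) → ℤ // IsGT a ∧ StrictRowsAboveBottom a ∧ BottomRow a k}

/-- Weakly increasing vectors. -/
def Weak {n : ℕ} (k : Fin n → ℤ) : Prop := ∀ p q : Fin n, p ≤ q → k p ≤ k q

/-- Adjacent entries are strictly increasing. -/
def AdjStrict {n : ℕ} (l : Fin n → ℤ) : Prop :=
  ∀ (i : Fin n) (h : i.1 + 1 < n), l i < l ⟨i.1 + 1, h⟩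

/-- Entry `i` equals the next one. -/
def EqNext {n : ℕ} (l : Fin n → ℤ) (i : Fin n) : Prop :=
  ∃ h : i.1 + 1 < n, l i = l ⟨i.1 + 1, h⟩

/-- All vectors interlacing with `k`. -/
noncomputable def box {n : ℕ} (k : Fin (n + 1) → ℤ) : Finset (Fin n → ℤ) :=
  Fintype.piFinset fun j => Finset.Icc (k j.castSucc) (k j.succ)

lemma mem_box_s13 {n : ℕ} {k : Fin (n + 1) → ℤ} {l : Fin n → ℤ} :
    l ∈ box k ↔ ∀ j, k j.castSucc ≤ l j ∧ l j ≤ k j.succ := by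
  simp [box, Fintype.mem_piFinset]

lemma row_congr {n : ℕ} (a : ∀ i : Fin n, Fin (i.1 + 1) → ℤ) {i i' : Fin n}
    (h : i.1 = i'.1) (j : Fin (i.1 + 1)) (j' : Fin (i'.1 + 1)) (hj : j.1 = j'.1) :
    a i j = a i' j' := by
  obtain rfl : i = i' := Fin.ext h
  obtain rfl : j = j' := Fin.ext hj
  rfl

/-- Add a bottom row. -/
def extendTri {n : ℕ} (b : ∀ i : Fin n, Fin (i.1 + 1) → ℤ) (k : Fin (n + 1) → ℤ) :
    ∀ i : Fin (n + 1), Fin (i.1 + 1) → ℤ :=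
  fun i j => if h : i.1 < n then b ⟨i.1, h⟩ j else k ⟨j.1, by omega⟩

lemma extendTri_mem {n : ℕ} (k : Fin (n + 1) → ℤ) (l : Fin n → ℤ)
    (hl : l ∈ box k) (hs : AdjStrict l) (b : MTW n l) :
    IsGT (extendTri b.1 k) ∧ StrictRowsAboveBottom (extendTri b.1 k) ∧
      BottomRow (extendTri b.1 k) k := by
  obtain ⟨b, h1, h2, h3⟩ := b
  rw [mem_box_s13] at hl
  refine ⟨?_, ?_, ?_⟩
  · intro i hi j
    have hin : i.1 < n := by omega
    by_cases hi' : i.1 + 1 < n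
    · have := h1 ⟨i.1, hin⟩ hi' j
      simpa only [extendTri, hin, hi', dif_pos] using this
    · have e := h3 ⟨i.1, hin⟩ (by show i.1 + 1 = n; omega) j
      have := hl ⟨j.1, by omega⟩
      simp only [extendTri, hin, hi', dif_pos, dif_neg, not_false_eq_true]
      rw [e]
      exact this
  · intro i hi j h
    have hin : i.1 < n := by omega
    simp only [extendTri, hin, dif_pos]
    by_cases hi' : i.1 + 1 < n
    · exact h2 ⟨i.1, hin⟩ hi' j h
    · rw [h3 ⟨i.1, hin⟩ (by show i.1 + 1 = n; omega) j,
        h3 ⟨i.1, hin⟩ (by show i.1 + 1 = n; omega) ⟨j.1 + 1, h⟩]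
      exact hs ⟨j.1, by omega⟩ (by show j.1 + 1 < n; omega)
  · intro i hi j
    have hin : ¬ i.1 < n := by omega
    simp only [extendTri, hin, dif_neg, not_false_eq_true]

/-- The index type of possible penultimate rows. -/
abbrev Pen {n : ℕ} (k : Fin (n + 1) → ℤ) : Type := {l : Fin n → ℤ // l ∈ box k ∧ AdjStrict l}

def glue {n : ℕ} (k : Fin (n + 1) → ℤ) (x : Σ l : Pen k, MTW n l.1) : MTW (n + 1) k :=
  ⟨extendTri x.2.1 k, extendTri_mem k x.1.1 x.1.2.1 x.1.2.2 x.2⟩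

lemma glue_bijective {n : ℕ} (k : Fin (n + 1) → ℤ) : Function.Bijective (glue k) := by
  constructor
  · rintro ⟨⟨l, hl⟩, ⟨b, hb⟩⟩ ⟨⟨l', hl'⟩, ⟨b', hb'⟩⟩ h
    have h' : extendTri b k = extendTri b' k := congrArg Subtype.val h
    have hbb : b = b' := by
      funext i j
      have := congrFun (congrFun h' i.castSucc) j
      simpa [extendTri] using this
    subst hbb
    have hll : l = l' := by
      funext j
      have hj := j.2
      have e1 := hb.2.2 ⟨n - 1, by omega⟩ (by show n - 1 + 1 = n; omega)
        ⟨j.1, by show j.1 < n - 1 + 1; omega⟩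
      have e2 := hb'.2.2 ⟨n - 1, by omega⟩ (by show n - 1 + 1 = n; omega)
        ⟨j.1, by show j.1 < n - 1 + 1; omega⟩
      exact e1.symm.trans e2
    subst hll
    rfl
  · rintro ⟨a, h1, h2, h3⟩
    let b : ∀ i : Fin n, Fin (i.1 + 1) → ℤ := fun i j => a i.castSucc j
    let l : Fin n → ℤ := fun j => b ⟨n - 1, by have := j.2; omega⟩ ⟨j.1, by show j.1 < n - 1 + 1; omega⟩
    have hbl : BottomRow b l := by
      intro i hi j
      exact row_congr b (by show i.1 = n - 1; omega) _ _ rfl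
    have hlast : ∀ j : Fin (n + 1), a (Fin.last n) j = k j := fun j =>
      h3 (Fin.last n) rfl j
    have hl : l ∈ box k := by
      rw [mem_box_s13]
      intro j
      have hj := j.2
      have := h1 ⟨n - 1, by omega⟩ (by show n - 1 + 1 < n + 1; omega)
        ⟨j.1, by show j.1 < n - 1 + 1; omega⟩
      rw [← hlast, ← hlast]
      have e1 := row_congr a (i := ⟨n - 1 + 1, by omega⟩) (i' := Fin.last n)
        (by show n - 1 + 1 = n; omega)
        ⟨j.1, by show j.1 < n - 1 + 1 + 1; omega⟩ j.castSucc rfl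
      have e2 := row_congr a (i := ⟨n - 1 + 1, by omega⟩) (i' := Fin.last n)
        (by show n - 1 + 1 = n; omega)
        ⟨j.1 + 1, by show j.1 + 1 < n - 1 + 1 + 1; omega⟩ j.succ rfl
      rw [← e1, ← e2]
      exact this
    have hs : AdjStrict l := by
      intro j hj
      exact h2 ⟨n - 1, by omega⟩ (by show n - 1 + 1 < n + 1; omega)
        ⟨j.1, by show j.1 < n - 1 + 1; omega⟩ (by show j.1 + 1 < n - 1 + 1; omega)
    refine ⟨⟨⟨l, hl, hs⟩, ⟨b, ?_, ?_, hbl⟩⟩, ?_⟩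
    · intro i hi j
      exact h1 i.castSucc (by show i.1 + 1 < n + 1; omega) j
    · intro i hi j h
      exact h2 i.castSucc (by show i.1 + 1 < n + 1; omega) j h
    · apply Subtype.ext
      funext i j
      show extendTri b k i j = a i j
      by_cases h : i.1 < n
      · simp only [extendTri, h, dif_pos]
        exact row_congr a rfl _ _ rfl
      · simp only [extendTri, h, dif_neg, not_false_eq_true]
        rw [h3 i (by omega) j]

instance pen_finite {n : ℕ} (k : Fin (n + 1) → ℤ) : Finite (Pen k) :=
  Finite.of_injective (fun l : Pen k => (⟨l.1, l.2.1⟩ : {l // l ∈ box k}))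
    (fun a b h => Subtype.ext (congrArg (fun x : {l // l ∈ box k} => x.1) h))

lemma mtw_finite : ∀ (n : ℕ) (k : Fin n → ℤ), Finite (MTW n k) := by
  intro n
  induction n with
  | zero =>
    intro k
    haveI : Subsingleton (MTW 0 k) := ⟨fun a b => Subtype.ext (funext fun i => i.elim0)⟩
    infer_instance
  | succ n ih =>
    intro k
    haveI := fun l : Pen k => ih l.1
    exact Finite.of_surjective (glue k) (glue_bijective k).2

open Classical in
lemma mtw_card_succ {n : ℕ} (k : Fin (n + 1) → ℤ) :
    (Nat.card (MTW (n + 1) k) : ℚ) =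
      ∑ l ∈ box k, if AdjStrict l then (Nat.card (MTW n l) : ℚ) else 0 := by
  haveI := fun l : Pen k => mtw_finite n l.1
  haveI : Fintype (Pen k) := Fintype.ofFinite _
  rw [← Nat.card_congr (Equiv.ofBijective _ (glue_bijective k)), Nat.card_sigma]
  push_cast
  rw [← Finset.sum_filter]
  symm
  apply Finset.sum_subtype
  intro x
  simp

lemma mtw_triple {n : ℕ} (l : Fin n → ℤ) (i : ℕ) (h : i + 2 < n)
    (e1 : l ⟨i, by omega⟩ = l ⟨i + 1, by omega⟩)
    (e2 : l ⟨i + 1, by omega⟩ = l ⟨i + 2, h⟩) : (Nat.card (MTW n l) : ℚ) = 0 := by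
  classical
  obtain ⟨m, rfl⟩ : ∃ m, n = m + 1 := ⟨n - 1, by omega⟩
  rw [mtw_card_succ]
  apply Finset.sum_eq_zero
  intro x hx
  rw [mem_box_s13] at hx
  rw [if_neg]
  intro hs
  have h1 := hx ⟨i, by omega⟩
  have h2 := hx ⟨i + 1, by omega⟩
  have h3 := hs ⟨i, by omega⟩ (by show i + 1 < m; omega)
  simp only [Fin.castSucc_mk, Fin.succ_mk] at h1 h2 h3
  have e2' : l ⟨i + 1, by omega⟩ = l ⟨i + 1 + 1, h⟩ := e2
  omega

lemma box_weak {n : ℕ} {k : Fin (n + 1) → ℤ} (hk : Weak k) {l : Fin n → ℤ} (hl : l ∈ box k) :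
    Weak l := by
  rw [mem_box_s13] at hl
  intro p q hpq
  rcases eq_or_lt_of_le hpq with rfl | h
  · exact le_rfl
  · exact (hl p).2.trans ((hk _ _ (by
      rw [Fin.le_def]; simp only [Fin.val_succ, Fin.val_castSucc]; exact h)).trans (hl q).1)

lemma adjStrict_iff {n : ℕ} {l : Fin n → ℤ} (hl : Weak l) :
    AdjStrict l ↔ ∀ i, ¬ EqNext l i := by
  constructor
  · rintro h i ⟨hi, e⟩
    exact (h i hi).ne e
  · intro h i hi
    exact lt_of_le_of_ne (hl _ _ (by rw [Fin.le_def]; simp)) (fun e => h i ⟨hi, e⟩)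

lemma faulhaber (d : ℕ) : ∃ f : Polynomial ℚ, ∀ a b : ℤ, a ≤ b →
    ∑ x ∈ Finset.Icc a b, (x : ℚ) ^ d = f.eval ((b : ℚ) + 1) - f.eval (a : ℚ) := by
  refine ⟨Polynomial.C ((d + 1 : ℚ)⁻¹) * Polynomial.bernoulli (d + 1), ?_⟩
  intro a b hab
  have hd : (d + 1 : ℚ) ≠ 0 := by positivity
  have key : ∀ x : ℚ, (Polynomial.C ((d + 1 : ℚ)⁻¹) * Polynomial.bernoulli (d + 1)).eval (x + 1)
      = (Polynomial.C ((d + 1 : ℚ)⁻¹) * Polynomial.bernoulli (d + 1)).eval x + x ^ d := by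
    intro x
    have := Polynomial.bernoulli_eval_one_add (d + 1) x
    rw [add_comm] at this
    simp only [Polynomial.eval_mul, Polynomial.eval_C, this]
    push_cast
    try simp only [Nat.add_sub_cancel]
    field_simp
  induction b, hab using Int.leInduction with
  | base => simp [key]
  | succ b hb ih =>
    have : Finset.Icc a (b + 1) = insert (b + 1) (Finset.Icc a b) := by
      ext x; simp only [Finset.mem_Icc, Finset.mem_insert]; omega
    rw [this, Finset.sum_insert (by simp), ih, key ((b + 1 : ℤ) : ℚ)]
    push_cast
    ring

lemma box_poly {m n : ℕ} (u v : Fin m → Fin n) (A : MvPolynomial (Fin m) ℚ) :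
    ∃ R : MvPolynomial (Fin n) ℚ, ∀ k : Fin n → ℤ, (∀ j, k (u j) ≤ k (v j)) →
      ∑ l ∈ Fintype.piFinset (fun j => Finset.Icc (k (u j)) (k (v j))),
        MvPolynomial.eval (fun i => (l i : ℚ)) A = MvPolynomial.eval (fun i => (k i : ℚ)) R := by
  induction A using MvPolynomial.induction_on' with
  | monomial d c =>
    choose f hf using faulhaber
    refine ⟨MvPolynomial.C c * ∏ j : Fin m,
      (Polynomial.aeval (MvPolynomial.X (v j) + 1 : MvPolynomial (Fin n) ℚ) (f (d j))
        - Polynomial.aeval (MvPolynomial.X (u j) : MvPolynomial (Fin n) ℚ) (f (d j))), ?_⟩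
    intro k hk
    have ev : ∀ (p : Polynomial ℚ) (q : MvPolynomial (Fin n) ℚ),
        MvPolynomial.eval (fun i => (k i : ℚ)) (Polynomial.aeval q p) =
          p.eval (MvPolynomial.eval (fun i => (k i : ℚ)) q) := by
      intro p q
      rw [Polynomial.aeval_def, Polynomial.hom_eval₂, Polynomial.eval]
      congr 1
      ext x
      simp
    have hm : ∀ l : Fin m → ℤ, MvPolynomial.eval (fun i => (l i : ℚ))
        (MvPolynomial.monomial d c) = c * ∏ j, (l j : ℚ) ^ d j := by
      intro l
      rw [MvPolynomial.eval_monomial, Finsupp.prod_fintype _ _ (by simp)]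
    simp only [hm, map_mul, map_prod, map_sub, ev, MvPolynomial.eval_C, map_add, map_one,
      MvPolynomial.eval_X]
    rw [← Finset.mul_sum]
    congr 1
    rw [← Finset.prod_univ_sum (fun j => Finset.Icc (k (u j)) (k (v j)))
      (fun j (x : ℤ) => (x : ℚ) ^ d j)]
    exact Finset.prod_congr rfl fun j _ => hf _ _ _ (hk j)
  | add p q hp hq =>
    obtain ⟨R, hR⟩ := hp
    obtain ⟨S, hS⟩ := hq
    refine ⟨R + S, fun k hk => ?_⟩
    simp only [map_add, Finset.sum_add_distrib, hR k hk, hS k hk]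

open Classical in
lemma term_poly {n : ℕ} (Q : MvPolynomial (Fin n) ℚ)
    (hQ : ∀ l : Fin n → ℤ, Weak l →
      MvPolynomial.eval (fun i => (l i : ℚ)) Q = (Nat.card (MTW n l) : ℚ))
    (S : Finset (Fin n)) :
    ∃ R : MvPolynomial (Fin (n + 1)) ℚ, ∀ k : Fin (n + 1) → ℤ, Weak k →
      ∑ l ∈ box k, (if ∀ i ∈ S, EqNext l i then
        MvPolynomial.eval (fun i => (l i : ℚ)) Q else 0) =
        MvPolynomial.eval (fun i => (k i : ℚ)) R := by
  by_cases h1 : ∃ i ∈ S, ¬ (i.1 + 1 < n)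
  · obtain ⟨i, hi, hin⟩ := h1
    refine ⟨0, fun k hk => ?_⟩
    rw [map_zero]
    apply Finset.sum_eq_zero
    intro l _
    rw [if_neg]
    intro h
    exact hin (h i hi).1
  by_cases h2 : ∃ i ∈ S, ∃ j ∈ S, i.1 + 1 = j.1
  · obtain ⟨i, hi, j, hj, hij⟩ := h2
    refine ⟨0, fun k hk => ?_⟩
    rw [map_zero]
    apply Finset.sum_eq_zero
    intro l hl
    split_ifs with h
    · rw [hQ l (box_weak hk hl)]
      obtain ⟨a1, e1⟩ := h i hi
      obtain ⟨a2, e2⟩ := h j hj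
      obtain rfl : j = ⟨i.1 + 1, a1⟩ := Fin.ext hij.symm
      exact mtw_triple l i.1 a2 e1 e2
    · rfl
  push Not at h1 h2
  let u : Fin n → Fin (n + 1) := fun j => if j ∈ S then j.succ else j.castSucc
  let v : Fin n → Fin (n + 1) := fun j => if ∃ i ∈ S, i.1 + 1 = j.1 then j.castSucc else j.succ
  obtain ⟨R, hR⟩ := box_poly u v Q
  refine ⟨R, fun k hk => ?_⟩
  have hstep : ∀ j : Fin n, k j.castSucc ≤ k j.succ := fun j =>
    hk _ _ (by rw [Fin.le_def]; simp)
  rw [← hR k]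
  · rw [← Finset.sum_filter]
    apply Finset.sum_congr _ (fun _ _ => rfl)
    ext l
    rw [Finset.mem_filter, mem_box_s13, Fintype.mem_piFinset]
    simp only [Finset.mem_Icc]
    constructor
    · rintro ⟨hl, hE⟩ j
      constructor
      · by_cases hj : j ∈ S
        · obtain ⟨hj1, e⟩ := hE j hj
          simp only [u, hj, if_true]
          rw [e]
          exact (hl ⟨j.1 + 1, hj1⟩).1
        · simp only [u, hj, if_false]
          exact (hl j).1
      · by_cases hj : ∃ i ∈ S, i.1 + 1 = j.1
        · simp only [v, hj, if_true]
          obtain ⟨i, hi, hij⟩ := hj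
          obtain ⟨hj1, e⟩ := hE i hi
          obtain rfl : j = ⟨i.1 + 1, hj1⟩ := Fin.ext hij.symm
          rw [← e]
          exact (hl i).2
        · simp only [v, hj, if_false]
          exact (hl j).2
    · intro h
      have hl : ∀ j, k j.castSucc ≤ l j ∧ l j ≤ k j.succ := by
        intro j
        refine ⟨le_trans ?_ (h j).1, le_trans (h j).2 ?_⟩
        · simp only [u]
          split_ifs
          · exact hstep j
          · exact le_rfl
        · simp only [v]
          split_ifs
          · exact hstep j
          · exact le_rfl
      refine ⟨hl, fun i hi => ⟨h1 i hi, ?_⟩⟩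
      have a1 := (h i).1
      have a2 := (h ⟨i.1 + 1, h1 i hi⟩).2
      have hex : ∃ i' ∈ S, i'.1 + 1 = i.1 + 1 := ⟨i, hi, rfl⟩
      simp only [u, hi, if_true] at a1
      simp only [v, hex, if_true] at a2
      have b1 := (hl i).2
      have b2 := (hl ⟨i.1 + 1, h1 i hi⟩).1
      have hcs : (⟨i.1 + 1, h1 i hi⟩ : Fin n).castSucc = i.succ := rfl
      rw [hcs] at a2 b2
      omega
  · intro j
    simp only [u, v]
    split_ifs with c1 c2 c2
    · obtain ⟨i, hi, hij⟩ := c2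
      exact absurd hij (h2 i hi j c1)
    · exact le_rfl
    · exact le_rfl
    · exact hstep j

lemma exists_poly : ∀ n : ℕ, ∃ Q : MvPolynomial (Fin n) ℚ, ∀ k : Fin n → ℤ, Weak k →
    MvPolynomial.eval (fun i => (k i : ℚ)) Q = (Nat.card (MTW n k) : ℚ) := by
  classical
  intro n
  induction n with
  | zero =>
    refine ⟨1, fun k _ => ?_⟩
    haveI : Unique (MTW 0 k) :=
      { default := ⟨fun i => i.elim0, fun i => i.elim0, fun i => i.elim0, fun i => i.elim0⟩
        uniq := fun b => Subtype.ext (funext fun i => i.elim0) }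
    simp
  | succ n ih =>
    obtain ⟨Q, hQ⟩ := ih
    choose R hR using term_poly Q hQ
    refine ⟨∑ S ∈ (Finset.univ : Finset (Fin n)).powerset, MvPolynomial.C ((-1) ^ S.card) * R S,
      fun k hk => ?_⟩
    rw [mtw_card_succ, map_sum]
    simp only [map_mul, MvPolynomial.eval_C]
    simp only [← hR _ k hk, Finset.mul_sum]
    rw [Finset.sum_comm]
    apply Finset.sum_congr rfl
    intro l hl
    have hw := box_weak hk hl
    have key : (if AdjStrict l then (1 : ℚ) else 0) =
        ∑ S ∈ (Finset.univ : Finset (Fin n)).powerset,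
          (-1) ^ S.card * (if ∀ i ∈ S, EqNext l i then (1 : ℚ) else 0) := by
      have e : (if AdjStrict l then (1 : ℚ) else 0) =
          ∏ i : Fin n, (1 + (-1) * if EqNext l i then (1 : ℚ) else 0) := by
        rw [adjStrict_iff hw]
        split_ifs with h
        · symm
          apply Finset.prod_eq_one
          intro i _
          simp [h i]
        · push Not at h
          obtain ⟨i, hi⟩ := h
          symm
          apply Finset.prod_eq_zero (Finset.mem_univ i)
          simp [hi]
      rw [e, Finset.prod_one_add]
      apply Finset.sum_congr rfl
      intro S _
      rw [Finset.prod_mul_distrib, Finset.prod_const, Finset.prod_boole]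
      congr
    have e2 : (if AdjStrict l then (Nat.card (MTW n l) : ℚ) else 0) =
        (if AdjStrict l then (1 : ℚ) else 0) * MvPolynomial.eval (fun i => (l i : ℚ)) Q := by
      rw [hQ l hw]; split_ifs <;> simp
    rw [e2, key, Finset.sum_mul]
    apply Finset.sum_congr rfl
    intro S _
    split_ifs <;> simp

lemma strict_card {n : ℕ} (k : Fin n → ℤ) (hk : ∀ p q : Fin n, p < q → k p < k q) :
    Nat.card {a : ∀ i : Fin n, Fin (i.1 + 1) → ℤ // IsGT a ∧ StrictRows a ∧ BottomRow a k} =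
      Nat.card (MTW n k) := by
  apply Nat.card_congr
  apply Equiv.subtypeEquivRight
  intro a
  constructor
  · rintro ⟨h1, h2, h3⟩
    exact ⟨h1, fun i _ => h2 i, h3⟩
  · rintro ⟨h1, h2, h3⟩
    refine ⟨h1, fun i j h => ?_, h3⟩
    by_cases hi : i.1 + 1 < n
    · exact h2 i hi j h
    · rw [h3 i (by omega) j, h3 i (by omega) ⟨j.1 + 1, h⟩]
      exact hk _ _ (by rw [Fin.lt_def]; simp)

lemma eval_eq_of_strict {n : ℕ} (P Q : MvPolynomial (Fin n) ℚ)
    (h : ∀ k : Fin n → ℤ, (∀ p q : Fin n, p < q → k p < k q) →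
      MvPolynomial.eval (fun i => (k i : ℚ)) P = MvPolynomial.eval (fun i => (k i : ℚ)) Q)
    (k : Fin n → ℤ) (hk : Weak k) :
    MvPolynomial.eval (fun i => (k i : ℚ)) P = MvPolynomial.eval (fun i => (k i : ℚ)) Q := by
  let g : Fin n → Polynomial ℚ := fun i =>
    Polynomial.C (k i : ℚ) + Polynomial.C ((i.1 : ℕ) : ℚ) * Polynomial.X
  have ev : ∀ (A : MvPolynomial (Fin n) ℚ) (t : ℚ),
      (MvPolynomial.aeval g A).eval t =
        MvPolynomial.eval (fun i => (k i : ℚ) + (i.1 : ℚ) * t) A := by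
    intro A t
    induction A using MvPolynomial.induction_on with
    | C a => simp
    | add p q hp hq => simp only [map_add, Polynomial.eval_add, hp, hq]
    | mul_X p i hp => simp only [map_mul, Polynomial.eval_mul, hp]; simp [g]
  have heq : MvPolynomial.aeval g P = MvPolynomial.aeval g Q := by
    apply Polynomial.eq_of_infinite_eval_eq
    apply Set.Infinite.mono (s := Set.range (fun t : ℕ => ((t + 1 : ℕ) : ℚ)))
    · rintro _ ⟨t, rfl⟩
      show Polynomial.eval _ _ = Polynomial.eval _ _
      rw [ev, ev]
      have := h (fun i => k i + (i.1 : ℤ) * ((t + 1 : ℕ) : ℤ)) (by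
        intro p q hpq
        have h1 := hk p q hpq.le
        have h2 : (p.1 : ℤ) < q.1 := by exact_mod_cast hpq
        have h3 : (0 : ℤ) < ((t + 1 : ℕ) : ℤ) := by positivity
        have := mul_lt_mul_of_pos_right h2 h3
        show k p + _ < k q + _
        linarith)
      push_cast at this ⊢
      exact this
    · apply Set.infinite_range_of_injective
      intro a b hab
      simpa using hab
  have := congrArg (Polynomial.eval 0) heq
  rw [ev, ev] at this
  simpa using this

/-- If a polynomial `P` agrees with the number of monotone triangles with bottom row `k`
for every strictly increasing `k`, then for every weakly increasing `k` it counts the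
Gelfand-Tsetlin patterns with bottom row `k` whose other rows are strictly increasing. -/
theorem monotone_triangle_weakly_increasing (n : ℕ) (hn : 1 ≤ n)
    (P : MvPolynomial (Fin n) ℚ)
    (hP : ∀ k : Fin n → ℤ, (∀ p q : Fin n, p < q → k p < k q) →
      MvPolynomial.eval (fun i => (k i : ℚ)) P =
        (Nat.card {a : ∀ i : Fin n, Fin (i.1 + 1) → ℤ //
          IsGT a ∧ StrictRows a ∧ BottomRow a k} : ℚ)) :
    ∀ k : Fin n → ℤ, (∀ p q : Fin n, p ≤ q → k p ≤ k q) →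
      MvPolynomial.eval (fun i => (k i : ℚ)) P =
        (Nat.card {a : ∀ i : Fin n, Fin (i.1 + 1) → ℤ //
          IsGT a ∧ StrictRowsAboveBottom a ∧ BottomRow a k} : ℚ) := by
  intro k hk
  obtain ⟨Q, hQ⟩ := exists_poly n
  rw [eval_eq_of_strict P Q _ k hk]
  · exact hQ k hk
  · intro k' hk'
    rw [hP k' hk', strict_card k' hk', hQ k']
    intro p q hpq
    rcases eq_or_lt_of_le hpq with rfl | h
    · exact le_rfl
    · exact (hk' p q h).le
end

section
/- Let n ≥ 2, let i ∈ {1,...,n−1}, and let integers k_1,...,k_i, k_{i+2},...,k_n satisfy k_1 < k_2 < ... < k_{i−1} < k_i − 1 and k_i < k_{i+2} < ... < k_n. For m = (m_1,...,m_n) ∈ ℤ^n, let N(m) denote the number of triangular integer arrays (a_{p,q})_{1 ≤ q ≤ p ≤ n} with a_{n,j} = m_j, with a_{p+1,q} ≤ a_{p,q} ≤ a_{p+1,q+1} for all 1 ≤ q ≤ p ≤ n−1, and with a_{p,q} < a_{p,q+1} for all 1 ≤ q < p ≤ n−1. Then N(k_1,...,k_{i−1}, k_i−1, k_i, k_{i+2},...,k_n)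 = N(k_1,...,k_{i−1}, k_i−1, k_i−1, k_{i+2},...,k_n) + N(k_1,...,k_{i−1}, k_i, k_i, k_{i+2},...,k_n). -/
/-- `N m`: the number of triangular integer arrays with bottom row `m`, satisfying the
Gelfand-Tsetlin condition, all rows except possibly the bottom row strictly
increasing. -/
noncomputable def Ncount (n : ℕ) (m : Fin n → ℤ) : ℕ :=
  Nat.card {a : ∀ i : Fin n, Fin (i.1 + 1) → ℤ //
    IsGT a ∧ StrictRowsAboveBottom a ∧ BottomRow a m}

/-- The set of arrays counted by `Ncount`. -/
def TSet (n : ℕ) (m : Fin n → ℤ) : Set (∀ i : Fin n, Fin (i.1 + 1) → ℤ) :=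
  {a | IsGT a ∧ StrictRowsAboveBottom a ∧ BottomRow a m}

theorem TSet_bounded (n : ℕ) (m : Fin n → ℤ) (L U : ℤ) (hL : ∀ j, L ≤ m j) (hU : ∀ j, m j ≤ U)
    (a : ∀ i : Fin n, Fin (i.1 + 1) → ℤ) (ha : a ∈ TSet n m) :
    ∀ d : ℕ, ∀ i : Fin n, i.1 + 1 + d = n → ∀ j, L ≤ a i j ∧ a i j ≤ U := by
  obtain ⟨hg, -, hb⟩ := ha
  intro d
  induction d with
  | zero =>
    intro i hi j
    rw [hb i (by omega) j]
    exact ⟨hL _, hU _⟩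
  | succ d ih =>
    intro i hi j
    have hi' : i.1 + 1 < n := by omega
    have h := hg i hi' j
    have h1 := ih ⟨i.1 + 1, hi'⟩ (by simp only; omega)
    exact ⟨(h1 _).1.trans h.1, h.2.trans (h1 _).2⟩

theorem TSet_finite (n : ℕ) (m : Fin n → ℤ) : (TSet n m).Finite := by
  obtain ⟨U, hU⟩ := (Set.finite_range m).bddAbove
  obtain ⟨L, hL⟩ := (Set.finite_range m).bddBelow
  refine (Set.finite_Icc (fun _ _ => L : ∀ i : Fin n, Fin (i.1 + 1) → ℤ)
    (fun _ _ => U)).subset ?_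
  intro a ha
  have h := TSet_bounded n m L U (fun j => hL ⟨j, rfl⟩) (fun j => hU ⟨j, rfl⟩) a ha
  exact ⟨fun i j => (h (n - (i.1 + 1)) i (by omega) j).1,
    fun i j => (h (n - (i.1 + 1)) i (by omega) j).2⟩

/-- Replace the bottom row by `m`. -/
def setBot {n : ℕ} (m : Fin n → ℤ) (a : ∀ i : Fin n, Fin (i.1 + 1) → ℤ) :
    ∀ i : Fin n, Fin (i.1 + 1) → ℤ :=
  fun i j => if i.1 + 1 = n then m ⟨j.1, by have := j.isLt; omega⟩ else a i j

/-- Interlacing of a row with the row below. -/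
def Interl {N : ℕ} (m : Fin (N + 2) → ℤ) (b : Fin (N + 1) → ℤ) : Prop :=
  ∀ j : Fin (N + 1), m ⟨j.1, by omega⟩ ≤ b j ∧ b j ≤ m ⟨j.1 + 1, by omega⟩

/-- Arrays with zero bottom row, whose other rows extend to an element of `TSet`. -/
def USet (N : ℕ) (m : Fin (N + 2) → ℤ) : Set (∀ i : Fin (N + 2), Fin (i.1 + 1) → ℤ) :=
  {a | BottomRow a 0 ∧ StrictRowsAboveBottom a ∧
    (∀ i : Fin (N + 2), ∀ hi : i.1 + 1 < N + 1, ∀ j : Fin (i.1 + 1),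
      a ⟨i.1 + 1, by omega⟩ ⟨j.1, by have := j.isLt; show j.1 < i.1 + 1 + 1; omega⟩ ≤ a i j ∧
      a i j ≤ a ⟨i.1 + 1, by omega⟩
        ⟨j.1 + 1, by have := j.isLt; show j.1 + 1 < i.1 + 1 + 1; omega⟩) ∧
    Interl m (a ⟨N, by omega⟩)}

theorem setBot_mem_U (N : ℕ) (m : Fin (N + 2) → ℤ) (a) (ha : a ∈ TSet (N + 2) m) :
    setBot 0 a ∈ USet N m := by
  obtain ⟨hg, hs, hb⟩ := ha
  refine ⟨?_, ?_, ?_, ?_⟩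
  · intro i hi j
    simp [setBot, hi]
  · intro i hi j h
    have h1 : ¬ (i.1 + 1 = N + 2) := by omega
    simp only [setBot, h1, if_false]
    exact hs i hi j h
  · intro i hi j
    have h1 : ¬ (i.1 + 1 = N + 2) := by omega
    have h2 : ¬ (i.1 + 1 + 1 = N + 2) := by omega
    simp only [setBot, h1, h2, if_false]
    exact hg i (by omega) j
  · intro j
    have h := hg ⟨N, by omega⟩ (by simp) j
    have e := hb ⟨N + 1, by omega⟩ rfl
    rw [e, e] at h
    have h1 : ¬ (N + 1 = N + 2) := by omega
    simp only [setBot, h1, if_false]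
    exact h

theorem setBot_mem_T (N : ℕ) (m : Fin (N + 2) → ℤ) (a) (ha : a ∈ USet N m) :
    setBot m a ∈ TSet (N + 2) m := by
  obtain ⟨hb, hs, hg, hI⟩ := ha
  refine ⟨?_, ?_, ?_⟩
  · intro i hi j
    have h1 : ¬ (i.1 + 1 = N + 2) := by omega
    by_cases h2 : i.1 + 1 + 1 = N + 2
    · obtain ⟨i, hi0⟩ := i
      have : i = N := by simp only at h2; omega
      subst this
      simp only [setBot, h1, if_false, if_true]
      exact hI j
    · simp only [setBot, h1, h2, if_false]
      exact hg i (by omega) j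
  · intro i hi j h
    have h1 : ¬ (i.1 + 1 = N + 2) := by omega
    simp only [setBot, h1, if_false]
    exact hs i hi j h
  · intro i hi j
    simp [setBot, hi]

theorem setBot_setBot {n : ℕ} (m m' : Fin n → ℤ) (a : ∀ i : Fin n, Fin (i.1 + 1) → ℤ)
    (hb : BottomRow a m) : setBot m (setBot m' a) = a := by
  funext i j
  by_cases h : i.1 + 1 = n
  · simp only [setBot, h, if_true]
    exact (hb i h j).symm
  · simp [setBot, h]

/-- The two sets are in bijection. -/
def equivTU (N : ℕ) (m : Fin (N + 2) → ℤ) : TSet (N + 2) m ≃ USet N m where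
  toFun a := ⟨setBot 0 a.1, setBot_mem_U N m a.1 a.2⟩
  invFun a := ⟨setBot m a.1, setBot_mem_T N m a.1 a.2⟩
  left_inv a := Subtype.ext (setBot_setBot _ _ _ a.2.2.2)
  right_inv a := Subtype.ext (setBot_setBot _ _ _ a.2.1)

theorem USet_finite (N : ℕ) (m : Fin (N + 2) → ℤ) : (USet N m).Finite := by
  have := (TSet_finite (N + 2) m).to_subtype
  have h := Finite.of_equiv _ (equivTU N m)
  exact Set.toFinite _

theorem Ncount_eq (N : ℕ) (m : Fin (N + 2) → ℤ) : Ncount (N + 2) m = (USet N m).ncard :=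
  Nat.card_congr (equivTU N m)

theorem inter_iff {N : ℕ} (t : ℕ) (ht : t < N + 1) (k : Fin (N + 2) → ℤ) (x : ℤ)
    (b : Fin (N + 1) → ℤ)
    (hs : ∀ j : Fin (N + 1), ∀ h : j.1 + 1 < N + 1, b j < b ⟨j.1 + 1, h⟩) :
    Interl (fun j => if j.1 = t then x - 1 else if j.1 = t + 1 then x else k j) b ↔
      Interl (fun j => if j.1 = t ∨ j.1 = t + 1 then x - 1 else k j) b ∨
      Interl (fun j => if j.1 = t ∨ j.1 = t + 1 then x else k j) b := by
  have hlo : ∀ j : Fin (N + 1), j.1 + 1 = t → b j < b ⟨t, ht⟩ := by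
    intro j hj
    subst hj
    exact hs j ht
  have hhi : ∀ j : Fin (N + 1), j.1 = t + 1 → b ⟨t, ht⟩ < b j := by
    rintro ⟨j, hj'⟩ hj
    simp only at hj
    subst hj
    exact hs ⟨t, ht⟩ hj'
  have hmid : ∀ j : Fin (N + 1), j.1 = t → b ⟨t, ht⟩ = b j := by
    rintro ⟨j, hj'⟩ hj
    simp only at hj
    subst hj
    rfl
  constructor
  · intro h
    have h0 := h ⟨t, ht⟩
    simp only [if_true] at h0
    rw [if_neg (by omega)] at h0
    have : b ⟨t, ht⟩ = x - 1 ∨ b ⟨t, ht⟩ = x := by omega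
    refine this.imp ?_ ?_ <;>
    · intro e j
      have hj := h j
      have a1 := hlo j
      have a2 := hhi j
      have a3 := hmid j
      simp only at hj ⊢
      constructor
      · have := hj.1
        split_ifs at this ⊢ <;> omega
      · have := hj.2
        split_ifs at this ⊢ <;> omega
  · rintro (h | h) <;>
    · intro j
      have h0 := h ⟨t, ht⟩
      simp only [true_or, or_true, if_true] at h0
      have hj := h j
      have a1 := hlo j
      have a2 := hhi j
      have a3 := hmid j
      simp only at hj ⊢
      constructor
      · have := hj.1
        split_ifs at this ⊢ <;> omega
      · have := hj.2
        split_ifs at this ⊢ <;> omega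

theorem inter_disj {N : ℕ} (t : ℕ) (ht : t < N + 1) (k : Fin (N + 2) → ℤ) (x : ℤ)
    (b : Fin (N + 1) → ℤ)
    (h1 : Interl (fun j => if j.1 = t ∨ j.1 = t + 1 then x - 1 else k j) b)
    (h2 : Interl (fun j => if j.1 = t ∨ j.1 = t + 1 then x else k j) b) : False := by
  have a1 := h1 ⟨t, ht⟩
  have a2 := h2 ⟨t, ht⟩
  simp only [true_or, or_true, if_true] at a1 a2
  omega

/-- With `k_1 < k_2 < … < k_{i-1} < k_i - 1` and `k_i < k_{i+2} < … < k_n`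
(1-based indexing; `k ⟨t⟩` is the paper's `k_{t+1}`, and the paper's `k_{i+1}` is
irrelevant), one has
`N(k_1,…,k_{i-1},k_i-1,k_i,k_{i+2},…,k_n)
  = N(k_1,…,k_{i-1},k_i-1,k_i-1,k_{i+2},…,k_n)
    + N(k_1,…,k_{i-1},k_i,k_i,k_{i+2},…,k_n)`. -/
theorem monotone_triangle_splitting (n : ℕ) (hn : 2 ≤ n) (i : ℕ)
    (hi1 : 1 ≤ i) (hi2 : i ≤ n - 1) (k : Fin n → ℤ)
    (h1 : ∀ a b : Fin n, a.1 + 1 = b.1 → b.1 + 2 ≤ i → k a < k b)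
    (h2 : ∀ a : Fin n, a.1 + 2 = i → k a < k ⟨i - 1, by omega⟩ - 1)
    (h3 : ∀ b : Fin n, b.1 = i + 1 → k ⟨i - 1, by omega⟩ < k b)
    (h4 : ∀ a b : Fin n, i + 1 ≤ a.1 → a.1 + 1 = b.1 → k a < k b) :
    Ncount n (fun j =>
        if j.1 = i - 1 then k ⟨i - 1, by omega⟩ - 1
        else if j.1 = i then k ⟨i - 1, by omega⟩
        else k j) =
      Ncount n (fun j =>
        if j.1 = i - 1 ∨ j.1 = i then k ⟨i - 1, by omega⟩ - 1 else k j) +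
      Ncount n (fun j =>
        if j.1 = i - 1 ∨ j.1 = i then k ⟨i - 1, by omega⟩ else k j) := by
  obtain ⟨N, rfl⟩ : ∃ N, n = N + 2 := ⟨n - 2, by omega⟩
  obtain ⟨t, rfl⟩ : ∃ t, i = t + 1 := ⟨i - 1, by omega⟩
  have ht : t < N + 1 := by omega
  simp only [Nat.add_sub_cancel]
  generalize k ⟨t, _⟩ = x
  rw [Ncount_eq, Ncount_eq, Ncount_eq, ← Set.ncard_union_eq _ (USet_finite _ _) (USet_finite _ _)]
  · congr 1
    ext a
    constructor
    · rintro ⟨hb, hs, hg, hI⟩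
      have hs' := hs ⟨N, by omega⟩ (by simp)
      rcases (inter_iff t ht k x _ hs').1 hI with h | h
      · exact Or.inl ⟨hb, hs, hg, h⟩
      · exact Or.inr ⟨hb, hs, hg, h⟩
    · rintro (⟨hb, hs, hg, hI⟩ | ⟨hb, hs, hg, hI⟩)
      · exact ⟨hb, hs, hg, (inter_iff t ht k x _ (hs ⟨N, by omega⟩ (by simp))).2 (Or.inl hI)⟩
      · exact ⟨hb, hs, hg, (inter_iff t ht k x _ (hs ⟨N, by omega⟩ (by simp))).2 (Or.inr hI)⟩
  · rw [Set.disjoint_left]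
    intro a ha hb
    exact inter_disj t ht k x _ ha.2.2.2 hb.2.2.2
end
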